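/- arXiv:1312.3679 — 2 statements merged into one kernel-verified Lean document; each statement's English description precedes it below -/
import Mathlib

section
/- Let n ≥ 3 and let D be a semisimple x-monotone drawing of K_n. Then for every integer k satisfying 0 ≤ k < n/2 − 1, the number of ≤≤k-edges satisfies E_{≤≤k}(D) ≥ 3·C(k+3, 3). -/
/-- `Zval n` is Hill's conjectured value
`Z(n) = (1/4)⌊n/2⌋⌊(n−1)/2⌋⌊(n−2)/2⌋⌊(n−3)/2⌋` for the crossing number of `K n`.
(The product of the four floors is always divisible by 4, so natural division is exact.) -/
def Zval (n : ℕ) : ℕ :=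
  n / 2 * ((n - 1) / 2) * ((n - 2) / 2) * ((n - 3) / 2) / 4

/-- An x-monotone drawing of the complete graph `K n`: vertices `v i = (x i, 0)` with
`x` strictly increasing, and for each pair `i < j` a continuous function `e i j` on
`[x i, x j]` vanishing at the endpoints, whose graph is the arc of the edge `{i, j}`.
Edges avoid the intermediate vertices, any two distinct edges meet in finitely many
interior parameters, and at each such common point the difference changes sign
(a proper crossing). -/
structure XMonotoneDrawing (n : ℕ) where
  x : Fin n → ℝ
  x_strictMono : StrictMono x
  e : Fin n → Fin n → ℝ → ℝ
  cont : ∀ i j : Fin n, i < j → ContinuousOn (e i j) (Set.Icc (x i) (x j))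
  end_left : ∀ i j : Fin n, i < j → e i j (x i) = 0
  end_right : ∀ i j : Fin n, i < j → e i j (x j) = 0
  avoid_vertex : ∀ i m j : Fin n, i < m → m < j → e i j (x m) ≠ 0
  cross_finite : ∀ i j k l : Fin n, i < j → k < l → (i, j) ≠ (k, l) →
    {t : ℝ | max (x i) (x k) < t ∧ t < min (x j) (x l) ∧ e i j t = e k l t}.Finite
  sign_change : ∀ i j k l : Fin n, i < j → k < l → (i, j) ≠ (k, l) →
    ∀ t : ℝ, max (x i) (x k) < t → t < min (x j) (x l) → e i j t = e k l t →
      ∃ ε > (0 : ℝ), ∀ s : ℝ, max (x i) (x k) < s → t - ε < s → s < t →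
        ∀ u : ℝ, u < min (x j) (x l) → t < u → u < t + ε →
          (e i j s - e k l s) * (e i j u - e k l u) < 0

namespace XMonotoneDrawing

variable {n : ℕ}

/-- The set of parameters at which the edges `{i,j}` and `{k,l}` cross
(both edges are parametrized over the `x`-axis). -/
def crossSet (D : XMonotoneDrawing n) (i j k l : Fin n) : Set ℝ :=
  {t : ℝ | max (D.x i) (D.x k) < t ∧ t < min (D.x j) (D.x l) ∧ D.e i j t = D.e k l t}

/-- The number of crossings between the edges `{i,j}` and `{k,l}`. -/
noncomputable def crossCount (D : XMonotoneDrawing n) (i j k l : Fin n) : ℕ :=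
  (D.crossSet i j k l).ncard

/-- Two edges `{i,j}` and `{k,l}` are adjacent if they share an endpoint index. -/
def Adj (i j k l : Fin n) : Prop := i = k ∨ i = l ∨ j = k ∨ j = l

/-- A drawing is semisimple if no two adjacent edges cross. -/
def Semisimple (D : XMonotoneDrawing n) : Prop :=
  ∀ i j k l : Fin n, i < j → k < l → (i, j) ≠ (k, l) → Adj i j k l →
    D.crossCount i j k l = 0

/-- A drawing is weakly semisimple if every two adjacent edges cross an even
number of times. -/
def WeaklySemisimple (D : XMonotoneDrawing n) : Prop :=
  ∀ i j k l : Fin n, i < j → k < l → (i, j) ≠ (k, l) → Adj i j k l →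
    Even (D.crossCount i j k l)

/-- A drawing is simple if no two adjacent edges cross and every two non-adjacent
edges cross at most once. -/
def Simple (D : XMonotoneDrawing n) : Prop :=
  ∀ i j k l : Fin n, i < j → k < l → (i, j) ≠ (k, l) →
    (Adj i j k l → D.crossCount i j k l = 0) ∧
    (¬ Adj i j k l → D.crossCount i j k l ≤ 1)

/-- `cr D`: the total number of crossings of `D`. (Each unordered pair of distinct
edges is counted twice in the sum, whence the division by 2; `crossCount` is
symmetric in the two edges.) -/
noncomputable def cr (D : XMonotoneDrawing n) : ℕ :=
  (∑ p : (Fin n × Fin n) × (Fin n × Fin n),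
      if p.1.1 < p.1.2 ∧ p.2.1 < p.2.2 ∧ p.1 ≠ p.2 then
        D.crossCount p.1.1 p.1.2 p.2.1 p.2.2
      else 0) / 2

/-- `ocr D`: the number of unordered pairs of edges of `D` crossing an odd number
of times. (Each unordered pair appears twice as an ordered pair.) -/
noncomputable def ocr (D : XMonotoneDrawing n) : ℕ :=
  {p : (Fin n × Fin n) × (Fin n × Fin n) |
    p.1.1 < p.1.2 ∧ p.2.1 < p.2.2 ∧ p.1 ≠ p.2 ∧
      Odd (D.crossCount p.1.1 p.1.2 p.2.1 p.2.2)}.ncard / 2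

/-- The signature of the triple `i < j < k`: `true` (i.e. `+`) if the vertex `v j`
lies below the edge `{i, k}`, i.e. `e i k (x j) > 0`, and `false` (i.e. `−`) otherwise. -/
noncomputable def sig (D : XMonotoneDrawing n) (i j k : Fin n) : Bool :=
  if 0 < D.e i k (D.x j) then true else false

/-- `D` realizes the signature function `σ` if `σ_D` and `σ` agree on all
increasing triples. -/
def Realizes (D : XMonotoneDrawing n) (σ : Fin n → Fin n → Fin n → Bool) : Prop :=
  ∀ i j k : Fin n, i < j → j < k → D.sig i j k = σ i j k

/-- A drawing is pseudolinear if its edges extend to continuous curves over all of `ℝ`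
that avoid all vertices other than their endpoints and such that any two of these
extended curves cross exactly once (the crossing being a sign change of the difference). -/
def Pseudolinear (D : XMonotoneDrawing n) : Prop :=
  ∃ p : Fin n → Fin n → ℝ → ℝ,
    (∀ i j : Fin n, i < j → Continuous (p i j)) ∧
    (∀ i j : Fin n, i < j → ∀ t ∈ Set.Icc (D.x i) (D.x j), p i j t = D.e i j t) ∧
    (∀ i j m : Fin n, i < j → m ≠ i → m ≠ j → p i j (D.x m) ≠ 0) ∧
    (∀ i j k l : Fin n, i < j → k < l → (i, j) ≠ (k, l) →
      ∃ t : ℝ, p i j t = p k l t ∧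
        ∀ s u : ℝ, s < t → t < u →
          (p i j s - p k l s) * (p i j u - p k l u) < 0)

/-- The arc of the edge `{i, j}` as a subset of the plane `ℝ × ℝ`. -/
def edgeArc (D : XMonotoneDrawing n) (i j : Fin n) : Set (ℝ × ℝ) :=
  {q : ℝ × ℝ | D.x i ≤ q.1 ∧ q.1 ≤ D.x j ∧ q.2 = D.e i j q.1}

/-- The union of all edge arcs of the drawing. -/
def arcUnion (D : XMonotoneDrawing n) : Set (ℝ × ℝ) :=
  ⋃ i : Fin n, ⋃ j : Fin n, ⋃ (_ : i < j), D.edgeArc i j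

end XMonotoneDrawing

namespace Sig

variable {n : ℕ}

/-- With respect to a signature function `σ`, the vertex `m ∉ {i, j}` is on the left of
the directed edge `(i, j)` (where `i < j`). -/
def LeftOf (σ : Fin n → Fin n → Fin n → Bool) (i j m : Fin n) : Prop :=
  (i < m ∧ m < j ∧ σ i m j = false) ∨ (m < i ∧ σ m i j = true) ∨ (j < m ∧ σ i j m = true)

/-- The number of vertices on the left of the directed edge `(i, j)`. -/
noncomputable def leftCount (σ : Fin n → Fin n → Fin n → Bool) (i j : Fin n) : ℕ :=
  {m : Fin n | LeftOf σ i j m}.ncard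

/-- The edge `{i, j}` (with `i < j`) is a `k`-edge of `σ` if `min(ℓ, n − 2 − ℓ) = k`,
where `ℓ` is the number of vertices on its left. -/
def IsKEdge (σ : Fin n → Fin n → Fin n → Bool) (k : ℕ) (i j : Fin n) : Prop :=
  min (leftCount σ i j) (n - 2 - leftCount σ i j) = k

/-- `Ek σ k`: the number of `k`-edges of `σ`. -/
noncomputable def Ek (σ : Fin n → Fin n → Fin n → Bool) (k : ℕ) : ℕ :=
  {p : Fin n × Fin n | p.1 < p.2 ∧ IsKEdge σ k p.1 p.2}.ncard

/-- `Ele σ k = E_{≤k}(σ)`: the number of `≤k`-edges of `σ`. -/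
noncomputable def Ele (σ : Fin n → Fin n → Fin n → Bool) (k : ℕ) : ℕ :=
  ∑ i ∈ Finset.range (k + 1), Ek σ i

/-- `Elele σ k = E_{≤≤k}(σ) = Σ_{j=0}^{k} E_{≤j}(σ)`. -/
noncomputable def Elele (σ : Fin n → Fin n → Fin n → Bool) (k : ℕ) : ℕ :=
  ∑ j ∈ Finset.range (k + 1), Ele σ j

/-- `E_{≤≤k}` with an integer index, which vanishes for negative `k`. -/
noncomputable def ElelZ (σ : Fin n → Fin n → Fin n → Bool) (k : ℤ) : ℕ :=
  if 0 ≤ k then Elele σ k.toNat else 0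

/-- The left count of the edge `{i, j}` in the drawing restricted to the first
`n − 1` vertices (the last vertex deleted). -/
noncomputable def leftCountRes (σ : Fin n → Fin n → Fin n → Bool) (i j : Fin n) : ℕ :=
  {m : Fin n | LeftOf σ i j m ∧ (m : ℕ) + 1 < n}.ncard

/-- The edge `{i, j}` is a `k`-edge of the restriction of `σ` to the first `n − 1`
vertices (there `min(ℓ', (n−1) − 2 − ℓ') = k`). -/
def IsKEdgeRes (σ : Fin n → Fin n → Fin n → Bool) (k : ℕ) (i j : Fin n) : Prop :=
  min (leftCountRes σ i j) (n - 3 - leftCountRes σ i j) = k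

/-- The edge `{i, j}` is a `(D,D')`-invariant `≤k`-edge: it avoids the last vertex and
is an `m`-edge with `m ≤ k` both in `σ` and in the restriction of `σ` to the first
`n − 1` vertices. -/
def InvariantLeK (σ : Fin n → Fin n → Fin n → Bool) (k : ℕ) (i j : Fin n) : Prop :=
  (j : ℕ) + 1 < n ∧ (∃ m ≤ k, IsKEdge σ m i j) ∧ (∃ m ≤ k, IsKEdgeRes σ m i j)

/-- The ten 4-tuple forms allowed in signature functions of semisimple x-monotone
drawings: `++++, −−−−, ++−−, −−++, −++−, +−−+, −−−+, +++−, +−−−, −+++`. -/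
def AllowedForm (a b c d : Bool) : Prop :=
  (a, b, c, d) ∈ ([(true, true, true, true), (false, false, false, false),
    (true, true, false, false), (false, false, true, true),
    (false, true, true, false), (true, false, false, true),
    (false, false, false, true), (true, true, true, false),
    (true, false, false, false), (false, true, true, true)] :
      List (Bool × Bool × Bool × Bool))

/-- A signature function is admissible if every increasing 4-tuple is of one of the
ten allowed forms. -/
def Admissible (σ : Fin n → Fin n → Fin n → Bool) : Prop :=
  ∀ a b c d : Fin n, a < b → b < c → c < d →
    AllowedForm (σ a b c) (σ a b d) (σ a c d) (σ b c d)

/-- The six convex forms: `++++, −−−−, ++−−, −−++, −++−, +−−+`. -/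
def ConvexForm (a b c d : Bool) : Prop :=
  (a, b, c, d) ∈ ([(true, true, true, true), (false, false, false, false),
    (true, true, false, false), (false, false, true, true),
    (false, true, true, false), (true, false, false, true)] :
      List (Bool × Bool × Bool × Bool))

/-- The 4-tuple `a < b < c < d` is convex in `σ`. -/
def Convex4 (σ : Fin n → Fin n → Fin n → Bool) (a b c d : Fin n) : Prop :=
  ConvexForm (σ a b c) (σ a b d) (σ a c d) (σ b c d)

/-- The eight 4-tuple forms of pseudolinear x-monotone drawings (the sign-monotone
sequences): `++++, +++−, ++−−, +−−−, −−−−, −−−+, −−++, −+++`. -/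
def PLForm (a b c d : Bool) : Prop :=
  (a, b, c, d) ∈ ([(true, true, true, true), (true, true, true, false),
    (true, true, false, false), (true, false, false, false),
    (false, false, false, false), (false, false, false, true),
    (false, false, true, true), (false, true, true, true)] :
      List (Bool × Bool × Bool × Bool))

/-- The relation `j ⋖ k` on `{j : i < j}`: `j ⋖ k` iff (`j < k` and `σ i j k = +`)
or (`k < j` and `σ i k j = −`). -/
def Below (σ : Fin n → Fin n → Fin n → Bool) (i j k : Fin n) : Prop :=
  (j < k ∧ σ i j k = true) ∨ (k < j ∧ σ i k j = false)

end Sig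

/-!
Around a vertex of a semisimple drawing, the edges to its right are linearly ordered from bottom
to top, and so are the edges to its left; for the signature this says exactly that every 4-tuple
has one of the ten allowed forms.

Delete the last vertex and count every `m`-edge with weight `K + 1 - m` before and weight `K - m`
after the deletion. For each `r` exactly one edge at the last vertex has `r` vertices on its left,
so these edges contribute at least `2 * (K + 2).choose 2`. No other edge loses weight, and an edge
that is an `m`-edge for the same `m ≤ K` before and after gains `1`. Number the vertices from `0`.
The edges going right from the `i`-th vertex pass above or below the deleted vertex; the top
`K + 1 - i` of the former and the bottom `K + 1 - i` of the latter keep their `m`, and these are at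
least `K + 1 - i` edges altogether. This contributes another
`∑ i, (K + 1 - i) = (K + 2).choose 2`, and induction sums the differences `3 * (K + 2).choose 2`
up to `3 * (K + 3).choose 3`.
-/

open Finset

theorem lt_iff_lt_of_isPreconnected_of_ne {X α : Type*} [TopologicalSpace X] [LinearOrder α]
    [TopologicalSpace α] [OrderClosedTopology α] {s : Set X} (hs : IsPreconnected s) {f g : X → α}
    (hf : ContinuousOn f s) (hg : ContinuousOn g s) (hne : ∀ x ∈ s, f x ≠ g x) {a b : X}
    (ha : a ∈ s) (hb : b ∈ s) : f a < g a ↔ f b < g b := by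
  suffices H : ∀ {a b}, a ∈ s → b ∈ s → f a < g a → f b < g b from ⟨H ha hb, H hb ha⟩
  intro a b ha hb hlt
  by_contra hle
  obtain ⟨x, hx, heq⟩ := hs.intermediate_value₂ ha hb hf hg hlt.le (not_lt.1 hle)
  exact hne x hx heq

theorem sum_range_tsub_eq_choose_two {M c : ℕ} (h : c ≤ M) :
    ∑ r ∈ range M, (c - r) = (c + 1).choose 2 := by
  induction c generalizing M with
  | zero => simp
  | succ c ih =>
    obtain ⟨M, rfl⟩ := Nat.exists_eq_succ_of_ne_zero (by omega : M ≠ 0)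
    simp only [Nat.succ_eq_add_one, sum_range_succ', Nat.add_sub_add_right, Nat.sub_zero,
      ih (Nat.succ_le_succ_iff.1 h), Nat.choose_succ_succ' (c + 1) 1, Nat.choose_one_right]
    exact add_comm _ _

/-! ### Ranks in a finite linear order -/

/-- The relation `r` restricted to `s` is a strict linear order. The signatures below order only the
vertices on one side of a given vertex, so the order axioms are relative to a set. -/
structure IsStrictLinearOrderOn {ι : Type*} (r : ι → ι → Prop) (s : Set ι) : Prop where
  irrefl : ∀ a ∈ s, ¬ r a a
  trans : ∀ a ∈ s, ∀ b ∈ s, ∀ c ∈ s, r a b → r b c → r a c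
  total : ∀ a ∈ s, ∀ b ∈ s, a ≠ b → r a b ∨ r b a

namespace IsStrictLinearOrderOn

variable {ι : Type*} {r : ι → ι → Prop}

theorem mono {s t : Set ι} (h : IsStrictLinearOrderOn r t) (hst : s ⊆ t) :
    IsStrictLinearOrderOn r s where
  irrefl a ha := h.irrefl a (hst ha)
  trans a ha b hb c hc := h.trans a (hst ha) b (hst hb) c (hst hc)
  total a ha b hb := h.total a (hst ha) b (hst hb)

theorem congr {r' : ι → ι → Prop} {s : Set ι} (h : IsStrictLinearOrderOn r s)
    (hr : ∀ a ∈ s, ∀ b ∈ s, (r' a b ↔ r a b)) : IsStrictLinearOrderOn r' s where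
  irrefl a ha := by rw [hr a ha a ha]; exact h.irrefl a ha
  trans a ha b hb c hc := by
    rw [hr a ha b hb, hr b hb c hc, hr a ha c hc]; exact h.trans a ha b hb c hc
  total a ha b hb := by rw [hr a ha b hb, hr b hb a ha]; exact h.total a ha b hb

theorem swap {s : Set ι} (h : IsStrictLinearOrderOn r s) :
    IsStrictLinearOrderOn (Function.swap r) s where
  irrefl := h.irrefl
  trans a ha b hb c hc hba hcb := h.trans c hc b hb a ha hcb hba
  total a ha b hb hne := (h.total a ha b hb hne).symm

variable [DecidableRel r] {s : Finset ι}

theorem injOn_rank (h : IsStrictLinearOrderOn r s) :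
    Set.InjOn (fun a => #{b ∈ s | r a b}) s := by
  have rank_lt : ∀ a ∈ s, ∀ b ∈ s, r a b → #{c ∈ s | r b c} < #{c ∈ s | r a c} := by
    intro a ha b hb hab
    refine card_lt_card ((ssubset_iff_of_subset fun c hc => ?_).2 ⟨b, ?_, ?_⟩)
    · rw [mem_filter] at hc ⊢
      exact ⟨hc.1, h.trans a ha b hb c hc.1 hab hc.2⟩
    · exact mem_filter.2 ⟨hb, hab⟩
    · exact fun hbb => h.irrefl b hb (mem_filter.1 hbb).2
  intro a ha b hb heq
  by_contra hne
  rcases h.total a ha b hb hne with hab | hba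
  · exact (rank_lt a ha b hb hab).ne' heq
  · exact (rank_lt b hb a ha hba).ne heq

theorem image_rank (h : IsStrictLinearOrderOn r s) :
    s.image (fun a => #{b ∈ s | r a b}) = range #s := by
  refine eq_of_subset_of_card_le (image_subset_iff.2 fun a ha => mem_range.2 ?_) ?_
  · exact card_lt_card (filter_ssubset.2 ⟨a, ha, h.irrefl a ha⟩)
  · rw [card_range, card_image_of_injOn h.injOn_rank]

theorem sum_rank {M : Type*} [AddCommMonoid M] (h : IsStrictLinearOrderOn r s) (φ : ℕ → M) :
    ∑ a ∈ s, φ #{b ∈ s | r a b} = ∑ k ∈ range #s, φ k := by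
  rw [← h.image_rank, sum_image h.injOn_rank]

theorem card_rank_lt (h : IsStrictLinearOrderOn r s) (c : ℕ) :
    #{a ∈ s | #{b ∈ s | r a b} < c} = min c #s := by
  rw [card_filter, h.sum_rank fun k => if k < c then 1 else 0, ← card_filter,
    ← card_range (min _ _)]
  congr 1
  ext k
  simp only [mem_filter, mem_range, lt_min_iff, and_comm]

end IsStrictLinearOrderOn

/-! ### Admissible signatures -/

namespace Sig

variable {n N : ℕ}

theorem allowedForm_iff {a b c d : Bool} :
    AllowedForm a b c d ↔ (a = c → b = a) ∧ (b = d → c = b) := by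
  revert a b c d
  unfold AllowedForm
  decide

instance (σ : Fin n → Fin n → Fin n → Bool) (i j m : Fin n) : Decidable (LeftOf σ i j m) :=
  inferInstanceAs (Decidable (_ ∨ _))

section LeftOf

variable {σ : Fin n → Fin n → Fin n → Bool} {i j m : Fin n}

theorem LeftOf.ne_and_ne (h : LeftOf σ i j m) (hij : i < j) : m ≠ i ∧ m ≠ j := by
  unfold LeftOf at h
  grind

theorem leftOf_iff_below_of_lt (him : i < m) : LeftOf σ i j m ↔ Below σ i j m := by
  simp [LeftOf, Below, him, him.not_gt, or_comm]

theorem leftOf_iff_below_of_gt (hmj : m < j) :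
    LeftOf σ i j m ↔ Below (fun d a b => σ a b d) j m i := by
  simp [LeftOf, Below, hmj, hmj.not_gt, or_comm]

theorem leftOf_compl_iff (hij : i < j) :
    LeftOf σᶜ i j m ↔ m ≠ i ∧ m ≠ j ∧ ¬ LeftOf σ i j m := by
  simp only [LeftOf, Pi.compl_apply, Bool.compl_eq_bnot]
  grind

theorem isStrictLinearOrderOn_below {s : Set (Fin n)}
    (h : ∀ a ∈ s, ∀ b ∈ s, ∀ c ∈ s, a < b → b < c → σ i a b = σ i b c → σ i a c = σ i a b) :
    IsStrictLinearOrderOn (Below σ i) s where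
  irrefl a _ := by simp [Below]
  trans a ha b hb c hc := by
    unfold Below
    grind
  total a _ b _ hab := by
    unfold Below
    grind

theorem Admissible.isStrictLinearOrderOn_right (h : Admissible σ) (i : Fin n) :
    IsStrictLinearOrderOn (LeftOf σ i) (Set.Ioi i) := by
  refine (isStrictLinearOrderOn_below fun a ha b _ c _ hab hbc => ?_).congr
    fun _ _ _ hm => leftOf_iff_below_of_lt hm
  exact (allowedForm_iff.1 (h i a b c ha hab hbc)).1

theorem Admissible.isStrictLinearOrderOn_left (h : Admissible σ) (j : Fin n) :
    IsStrictLinearOrderOn (fun i => LeftOf σ i j) (Set.Iio j) := by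
  refine (isStrictLinearOrderOn_below (σ := fun d a b => σ a b d)
    fun a _ b _ c hc hab hbc heq => ?_).swap.congr fun _ _ _ hm => leftOf_iff_below_of_gt hm
  exact (allowedForm_iff.1 (h a b c j hab hbc hc)).2 heq

theorem Admissible.compl (h : Admissible σ) : Admissible σᶜ := by
  intro a b c d hab hbc hcd
  simpa only [allowedForm_iff, Pi.compl_apply, compl_inj_iff] using h a b c d hab hbc hcd

theorem leftCount_eq_card (i j : Fin n) : leftCount σ i j = #{m | LeftOf σ i j m} := by
  rw [leftCount, ← Set.ncard_coe_finset, coe_filter_univ]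

theorem leftCount_add_leftCount_compl (hij : i < j) :
    leftCount σ i j + leftCount σᶜ i j = n - 2 := by
  have hcompl : ({m | LeftOf σᶜ i j m} : Finset (Fin n)) =
      {m ∈ ({i, j} : Finset (Fin n))ᶜ | ¬ LeftOf σ i j m} := by
    ext m
    simp [leftOf_compl_iff hij, and_assoc]
  have hself : ({m | LeftOf σ i j m} : Finset (Fin n)) =
      {m ∈ ({i, j} : Finset (Fin n))ᶜ | LeftOf σ i j m} := by
    ext m
    simp only [mem_filter, mem_univ, true_and, mem_compl, mem_insert, mem_singleton, not_or]
    exact ⟨fun h => ⟨h.ne_and_ne hij, h⟩, And.right⟩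
  rw [leftCount_eq_card, leftCount_eq_card, hcompl, hself, card_filter_add_card_filter_not,
    card_compl, card_pair hij.ne, Fintype.card_fin]

/-- An edge `{i, j}` is a `k`-edge if and only if its depth is `k`. -/
noncomputable def edgeDepth (σ : Fin n → Fin n → Fin n → Bool) (i j : Fin n) : ℕ :=
  min (leftCount σ i j) (n - 2 - leftCount σ i j)

theorem edgeDepth_eq_min_compl (hij : i < j) :
    edgeDepth σ i j = min (leftCount σ i j) (leftCount σᶜ i j) := by
  rw [edgeDepth, ← leftCount_add_leftCount_compl hij, Nat.add_sub_cancel_left]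

theorem edgeDepth_compl (hij : i < j) : edgeDepth σᶜ i j = edgeDepth σ i j := by
  rw [edgeDepth_eq_min_compl hij, edgeDepth_eq_min_compl hij, compl_compl, min_comm]

end LeftOf

/-- The sum of `K - m` over all `m`-edges with `m < K`. By `Elele_eq_edgeWeight` this is
`E_{≤≤K-1}`; shifting the index starts the induction at `K = 0`, where the truncated differences
all vanish. -/
noncomputable def edgeWeight (σ : Fin n → Fin n → Fin n → Bool) (K : ℕ) : ℕ :=
  ∑ j, ∑ i ∈ Iio j, (K - edgeDepth σ i j)

theorem Ek_eq_sum (σ : Fin n → Fin n → Fin n → Bool) (k : ℕ) :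
    Ek σ k = ∑ j, ∑ i ∈ Iio j, if edgeDepth σ i j = k then 1 else 0 := by
  have hcard : Ek σ k = #{p : Fin n × Fin n | p.1 < p.2 ∧ edgeDepth σ p.1 p.2 = k} := by
    rw [Ek, ← Set.ncard_coe_finset, coe_filter_univ]
    rfl
  rw [hcard, card_filter, Fintype.sum_prod_type_right]
  simp only [← filter_gt_eq_Iio, sum_filter, ite_and]

theorem Ele_eq_sum (σ : Fin n → Fin n → Fin n → Bool) (k : ℕ) :
    Ele σ k = ∑ j, ∑ i ∈ Iio j, if edgeDepth σ i j ≤ k then 1 else 0 := by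
  simp only [Ele, Ek_eq_sum]
  rw [sum_comm]
  refine sum_congr rfl fun j _ => ?_
  rw [sum_comm]
  simp only [sum_ite_eq, mem_range, Nat.lt_succ_iff]

theorem edgeWeight_succ (σ : Fin n → Fin n → Fin n → Bool) (k : ℕ) :
    edgeWeight σ (k + 1) = edgeWeight σ k + Ele σ k := by
  simp only [edgeWeight, Ele_eq_sum, ← sum_add_distrib]
  refine sum_congr rfl fun j _ => sum_congr rfl fun i _ => ?_
  split_ifs <;> omega

theorem Elele_eq_edgeWeight (σ : Fin n → Fin n → Fin n → Bool) (k : ℕ) :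
    Elele σ k = edgeWeight σ (k + 1) :=
  sum_range_induction _ _ (by simp [edgeWeight]) _ fun m _ => edgeWeight_succ σ m

/-! ### Deleting the last vertex -/

/-- The signature induced on all vertices but the last one. -/
def deleteLast (σ : Fin (N + 1) → Fin (N + 1) → Fin (N + 1) → Bool) :
    Fin N → Fin N → Fin N → Bool :=
  fun i j m => σ i.castSucc j.castSucc m.castSucc

/-- An edge avoiding the last vertex that is an `m`-edge for the same `m ≤ K` before and after the
deletion of the last vertex; `InvariantLeK` allows two different values of `m`. -/
def IsInvariant (σ : Fin (N + 1) → Fin (N + 1) → Fin (N + 1) → Bool) (K : ℕ) (i j : Fin N) : Prop :=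
  edgeDepth σ i.castSucc j.castSucc = edgeDepth (deleteLast σ) i j ∧
    edgeDepth (deleteLast σ) i j ≤ K

noncomputable instance (σ : Fin (N + 1) → Fin (N + 1) → Fin (N + 1) → Bool) (K : ℕ) (i j : Fin N) :
    Decidable (IsInvariant σ K i j) :=
  inferInstanceAs (Decidable (_ ∧ _))

variable {σ : Fin (N + 1) → Fin (N + 1) → Fin (N + 1) → Bool} {K : ℕ} {i j : Fin N}

protected theorem Admissible.deleteLast (h : Admissible σ) : Admissible (deleteLast σ) :=
  fun a b c d => h a.castSucc b.castSucc c.castSucc d.castSucc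

theorem leftCount_castSucc :
    leftCount σ i.castSucc j.castSucc = leftCount (deleteLast σ) i j +
      if LeftOf σ i.castSucc j.castSucc (Fin.last N) then 1 else 0 := by
  simp only [leftCount_eq_card, card_filter, Fin.sum_univ_castSucc]
  rfl

theorem edgeDepth_castSucc_le :
    edgeDepth σ i.castSucc j.castSucc ≤ edgeDepth (deleteLast σ) i j + 1 := by
  simp only [edgeDepth, leftCount_castSucc]
  split_ifs <;> omega

theorem tsub_edgeDepth_deleteLast_add_le :
    K - edgeDepth (deleteLast σ) i j + (if IsInvariant σ K i j then 1 else 0) ≤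
      K + 1 - edgeDepth σ i.castSucc j.castSucc := by
  have hle := edgeDepth_castSucc_le (σ := σ) (i := i) (j := j)
  split_ifs with hinv
  · have := hinv.1
    have := hinv.2
    omega
  · omega

theorem isInvariant_compl_iff (hij : i < j) : IsInvariant σᶜ K i j ↔ IsInvariant σ K i j := by
  have hdepth : edgeDepth (deleteLast σᶜ) i j = edgeDepth (deleteLast σ) i j :=
    edgeDepth_compl hij
  rw [IsInvariant, IsInvariant, hdepth, edgeDepth_compl (Fin.castSucc_lt_castSucc_iff.2 hij)]

theorem isInvariant_of_leftCount_le (hK : 2 * K + 2 ≤ N)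
    (hlast : ¬ LeftOf σ i.castSucc j.castSucc (Fin.last N))
    (hcount : leftCount (deleteLast σ) i j ≤ K) : IsInvariant σ K i j := by
  simp only [IsInvariant, edgeDepth, leftCount_castSucc, if_neg hlast]
  omega

theorem leftOf_compl_last_iff (hij : i < j) :
    LeftOf σᶜ i.castSucc j.castSucc (Fin.last N) ↔
      ¬ LeftOf σ i.castSucc j.castSucc (Fin.last N) := by
  simp [leftOf_compl_iff (Fin.castSucc_lt_castSucc_iff.2 hij), (Fin.castSucc_ne_last _).symm]

/-- A vertex `m > i` on the left of the edge from `i` to `j` has its edge from `i` above that edge,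
so if the edge to `j` passes above the last vertex, then so does the edge to `m`. -/
theorem Admissible.leftCount_deleteLast_le (h : Admissible σ) (hij : i < j)
    (hlast : ¬ LeftOf σ i.castSucc j.castSucc (Fin.last N)) :
    leftCount (deleteLast σ) i j ≤
      i + #{m ∈ Ioi i | ¬ LeftOf σ i.castSucc m.castSucc (Fin.last N) ∧
        LeftOf (deleteLast σ) i j m} := by
  rw [leftCount_eq_card, ← Fin.card_Iio i]
  refine (card_le_card fun m hm => ?_).trans (card_union_le _ _)
  rw [mem_filter_univ] at hm
  rcases lt_or_gt_of_ne (hm.ne_and_ne hij).1 with hmi | him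
  · exact mem_union_left _ (mem_Iio.2 hmi)
  · refine mem_union_right _ (mem_filter.2 ⟨mem_Ioi.2 him, fun hm' => hlast ?_, hm⟩)
    exact (h.isStrictLinearOrderOn_right i.castSucc).trans _ (Fin.castSucc_lt_castSucc_iff.2 hij)
      _ (Fin.castSucc_lt_castSucc_iff.2 him) _ (Fin.castSucc_lt_last i) hm hm'

theorem Admissible.min_le_card_isInvariant_above (h : Admissible σ) (hK : 2 * K + 2 ≤ N)
    (i : Fin N) :
    min (K + 1 - i) #{j ∈ Ioi i | ¬ LeftOf σ i.castSucc j.castSucc (Fin.last N)} ≤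
      #{j ∈ Ioi i | ¬ LeftOf σ i.castSucc j.castSucc (Fin.last N) ∧ IsInvariant σ K i j} := by
  set above : Finset (Fin N) := {j ∈ Ioi i | ¬ LeftOf σ i.castSucc j.castSucc (Fin.last N)}
  have horder : IsStrictLinearOrderOn (LeftOf (deleteLast σ) i) above :=
    (h.deleteLast.isStrictLinearOrderOn_right i).mono fun j hj => mem_Ioi.1 (mem_filter.1 hj).1
  rw [← horder.card_rank_lt]
  refine card_le_card fun j hj => ?_
  obtain ⟨hj, hrank⟩ := mem_filter.1 hj
  obtain ⟨hij, hlast⟩ := mem_filter.1 hj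
  have hcount : leftCount (deleteLast σ) i j ≤
      i + #{m ∈ above | LeftOf (deleteLast σ) i j m} := by
    simpa only [above, filter_filter] using h.leftCount_deleteLast_le (mem_Ioi.1 hij) hlast
  exact mem_filter.2 ⟨hij, hlast, isInvariant_of_leftCount_le hK hlast (by omega)⟩

theorem Admissible.min_le_card_isInvariant_below (h : Admissible σ) (hK : 2 * K + 2 ≤ N)
    (i : Fin N) :
    min (K + 1 - i) #{j ∈ Ioi i | LeftOf σ i.castSucc j.castSucc (Fin.last N)} ≤
      #{j ∈ Ioi i | LeftOf σ i.castSucc j.castSucc (Fin.last N) ∧ IsInvariant σ K i j} := by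
  have hlast : ∀ j ∈ Ioi i, LeftOf σ i.castSucc j.castSucc (Fin.last N) ↔
      ¬ LeftOf σᶜ i.castSucc j.castSucc (Fin.last N) := fun j hj => by
    rw [leftOf_compl_last_iff (mem_Ioi.1 hj), not_not]
  rw [filter_congr hlast, filter_congr fun j hj =>
    and_congr (hlast j hj) (isInvariant_compl_iff (mem_Ioi.1 hj)).symm]
  exact h.compl.min_le_card_isInvariant_above hK i

theorem Admissible.le_card_isInvariant (h : Admissible σ) (hK : 2 * K + 2 ≤ N) (i : Fin N) :
    K + 1 - i ≤ #{j ∈ Ioi i | IsInvariant σ K i j} := by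
  have habove := h.min_le_card_isInvariant_above hK i
  have hbelow := h.min_le_card_isInvariant_below hK i
  have hall := card_filter_add_card_filter_not (s := Ioi i)
    fun j => LeftOf σ i.castSucc j.castSucc (Fin.last N)
  have hinv := card_filter_add_card_filter_not (s := {j ∈ Ioi i | IsInvariant σ K i j})
    fun j => LeftOf σ i.castSucc j.castSucc (Fin.last N)
  simp only [filter_filter, and_comm (a := IsInvariant σ K i _)] at hinv
  rw [Fin.card_Ioi] at hall
  omega

theorem Admissible.choose_two_le_sum_card_isInvariant (h : Admissible σ) (hK : 2 * K + 2 ≤ N) :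
    (K + 2).choose 2 ≤ ∑ i, #{j ∈ Ioi i | IsInvariant σ K i j} := by
  rw [← sum_range_tsub_eq_choose_two (by omega : K + 1 ≤ N),
    ← Fin.sum_univ_eq_sum_range (fun r => K + 1 - r)]
  exact sum_le_sum fun i _ => h.le_card_isInvariant hK i

theorem Admissible.sum_tsub_leftCount_last (h : Admissible σ) {c : ℕ} (hc : c ≤ N) :
    ∑ i ∈ Iio (Fin.last N), (c - leftCount σ i (Fin.last N)) = (c + 1).choose 2 := by
  have horder : IsStrictLinearOrderOn (fun i => LeftOf σ i (Fin.last N)) (Iio (Fin.last N)) := by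
    simpa only [coe_Iio] using h.isStrictLinearOrderOn_left (Fin.last N)
  have hrank : ∀ i ∈ Iio (Fin.last N), leftCount σ i (Fin.last N) =
      #{m ∈ Iio (Fin.last N) | LeftOf σ i (Fin.last N) m} := by
    intro i hi
    rw [leftCount_eq_card]
    congr 1
    ext m
    simp only [mem_filter, mem_univ, true_and, mem_Iio, iff_and_self]
    exact fun hm => Fin.lt_last_iff_ne_last.2 (hm.ne_and_ne (mem_Iio.1 hi)).2
  rw [sum_congr rfl fun i hi => congrArg (c - ·) (hrank i hi), horder.sum_rank (c - ·),
    Fin.card_Iio, Fin.val_last, sum_range_tsub_eq_choose_two hc]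

theorem Admissible.two_mul_choose_two_le_sum_last (h : Admissible σ) (hK : 2 * K + 2 ≤ N) :
    2 * (K + 2).choose 2 ≤ ∑ i ∈ Iio (Fin.last N), (K + 1 - edgeDepth σ i (Fin.last N)) := by
  have hsum := h.sum_tsub_leftCount_last (by omega : K + 1 ≤ N)
  have hsum_compl := h.compl.sum_tsub_leftCount_last (by omega : K + 1 ≤ N)
  calc 2 * (K + 2).choose 2
      = ∑ i ∈ Iio (Fin.last N),
          ((K + 1 - leftCount σ i (Fin.last N)) + (K + 1 - leftCount σᶜ i (Fin.last N))) := by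
        rw [sum_add_distrib, hsum, hsum_compl, two_mul]
    _ ≤ ∑ i ∈ Iio (Fin.last N), (K + 1 - edgeDepth σ i (Fin.last N)) := by
        refine sum_le_sum fun i hi => ?_
        have hadd := leftCount_add_leftCount_compl (σ := σ) (mem_Iio.1 hi)
        rw [edgeDepth_eq_min_compl (mem_Iio.1 hi)]
        omega

theorem edgeWeight_eq_add_sum_last (σ : Fin (N + 1) → Fin (N + 1) → Fin (N + 1) → Bool) (K : ℕ) :
    edgeWeight σ K = ∑ i : Fin N, ∑ j ∈ Ioi i, (K - edgeDepth σ i.castSucc j.castSucc) +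
      ∑ i ∈ Iio (Fin.last N), (K - edgeDepth σ i (Fin.last N)) := by
  rw [edgeWeight, Fin.sum_univ_castSucc]
  congr 1
  rw [sum_comm' (t' := univ) (s' := Iio) fun i j => by simp]
  refine sum_congr rfl fun j _ => ?_
  rw [← Fin.map_castSuccEmb_Iio, sum_map]
  rfl

theorem Admissible.edgeWeight_deleteLast_add_le (h : Admissible σ) (hK : 2 * K + 2 ≤ N) :
    edgeWeight (deleteLast σ) K + 3 * (K + 2).choose 2 ≤ edgeWeight σ (K + 1) := by
  have hinv : edgeWeight (deleteLast σ) K + ∑ i, #{j ∈ Ioi i | IsInvariant σ K i j} ≤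
      ∑ i : Fin N, ∑ j ∈ Ioi i, (K + 1 - edgeDepth σ i.castSucc j.castSucc) := by
    rw [edgeWeight, sum_comm' (t' := univ) (s' := Ioi) fun i j => by simp]
    simp only [card_filter, ← sum_add_distrib]
    exact sum_le_sum fun i _ => sum_le_sum fun j _ => tsub_edgeDepth_deleteLast_add_le
  have hmiddle := h.choose_two_le_sum_card_isInvariant hK
  have hlast := h.two_mul_choose_two_le_sum_last hK
  rw [edgeWeight_eq_add_sum_last]
  omega

theorem Admissible.le_edgeWeight {σ : Fin n → Fin n → Fin n → Bool} (h : Admissible σ)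
    (hK : 2 * K < n) : 3 * (K + 2).choose 3 ≤ edgeWeight σ K := by
  induction K generalizing n with
  | zero => simp
  | succ K ih =>
    obtain ⟨N, rfl⟩ := Nat.exists_eq_succ_of_ne_zero (by omega : n ≠ 0)
    calc 3 * (K + 3).choose 3 = 3 * (K + 2).choose 3 + 3 * (K + 2).choose 2 := by
          rw [Nat.choose_succ_succ' (K + 2) 2]; ring
      _ ≤ edgeWeight (deleteLast σ) K + 3 * (K + 2).choose 2 := by
          gcongr
          exact ih h.deleteLast (by omega)
      _ ≤ edgeWeight σ (K + 1) := h.edgeWeight_deleteLast_add_le (by omega)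

end Sig

/-! ### Signatures of semisimple drawings -/

namespace XMonotoneDrawing

variable {n : ℕ} {D : XMonotoneDrawing n} {i j k l m : Fin n} {t : ℝ}

theorem sig_eq_true_iff : D.sig i j m = true ↔ 0 < D.e i m (D.x j) := by
  simp [sig]

theorem Semisimple.ne_of_adj (hD : D.Semisimple) (hij : i < j) (hkl : k < l)
    (hne : (i, j) ≠ (k, l)) (hadj : Adj i j k l)
    (ht : t ∈ Set.Ioo (max (D.x i) (D.x k)) (min (D.x j) (D.x l))) : D.e i j t ≠ D.e k l t := by
  intro heq
  have hempty : D.crossSet i j k l = ∅ :=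
    (Set.ncard_eq_zero (D.cross_finite i j k l hij hkl hne)).1 (hD i j k l hij hkl hne hadj)
  exact Set.eq_empty_iff_forall_notMem.1 hempty t ⟨ht.1, ht.2, heq⟩

theorem Semisimple.lt_iff_of_left (hD : D.Semisimple) (hij : i < j) (hjm : j < m)
    (ht : t ∈ Set.Ioo (D.x i) (D.x j)) : D.e i j t < D.e i m t ↔ D.sig i j m = true := by
  have hx := D.x_strictMono hjm
  have hne : ∀ s ∈ Set.Ioc (D.x i) (D.x j), D.e i j s ≠ D.e i m s := by
    rintro s ⟨his, hsj⟩
    rcases hsj.lt_or_eq with hsj | rfl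
    · exact hD.ne_of_adj hij (hij.trans hjm) (by simp [hjm.ne]) (Or.inl rfl)
        ⟨by simpa using his, lt_min hsj (hsj.trans hx)⟩
    · rw [D.end_right i j hij]
      exact (D.avoid_vertex i j m hij hjm).symm
  rw [sig_eq_true_iff, ← D.end_right i j hij]
  exact lt_iff_lt_of_isPreconnected_of_ne Set.ordConnected_Ioc.isPreconnected
    ((D.cont i j hij).mono Set.Ioc_subset_Icc_self)
    ((D.cont i m (hij.trans hjm)).mono
      (Set.Ioc_subset_Icc_self.trans (Set.Icc_subset_Icc_right hx.le)))
    hne (Set.Ioo_subset_Ioc_self ht) (Set.right_mem_Ioc.2 (D.x_strictMono hij))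

theorem Semisimple.lt_iff_of_right (hD : D.Semisimple) (hmi : m < i) (hij : i < j)
    (ht : t ∈ Set.Ioo (D.x i) (D.x j)) : D.e i j t < D.e m j t ↔ D.sig m i j = true := by
  have hx := D.x_strictMono hmi
  have hne : ∀ s ∈ Set.Ico (D.x i) (D.x j), D.e i j s ≠ D.e m j s := by
    rintro s ⟨his, hsj⟩
    rcases his.lt_or_eq with his | rfl
    · exact hD.ne_of_adj hij (hmi.trans hij) (by simp [hmi.ne']) (Or.inr (Or.inr (Or.inr rfl)))
        ⟨max_lt his (hx.trans his), by simpa using hsj⟩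
    · rw [D.end_left i j hij]
      exact (D.avoid_vertex m i j hmi hij).symm
  rw [sig_eq_true_iff, ← D.end_left i j hij]
  exact lt_iff_lt_of_isPreconnected_of_ne Set.ordConnected_Ico.isPreconnected
    ((D.cont i j hij).mono Set.Ico_subset_Icc_self)
    ((D.cont m j (hmi.trans hij)).mono
      (Set.Ico_subset_Icc_self.trans (Set.Icc_subset_Icc_left hx.le)))
    hne (Set.Ioo_subset_Ico_self ht) (Set.left_mem_Ico.2 (D.x_strictMono hij))

/-- Just right of `x a` the edges from `a` to `b`, `c`, `d` have distinct heights, whose order is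
recorded by the signs of `abc`, `abd` and `acd`; just left of `x d` the same holds for the edges
from `a`, `b`, `c` to `d`. -/
theorem Semisimple.admissible_sig (hD : D.Semisimple) : Sig.Admissible D.sig := by
  intro a b c d hab hbc hcd
  obtain ⟨t, hat, htb⟩ := exists_between (D.x_strictMono hab)
  obtain ⟨u, hcu, hud⟩ := exists_between (D.x_strictMono hcd)
  have hleft : D.sig a b c = D.sig a c d → D.sig a b d = D.sig a b c := by
    have habc := hD.lt_iff_of_left hab hbc ⟨hat, htb⟩
    have habd := hD.lt_iff_of_left hab (hbc.trans hcd) ⟨hat, htb⟩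
    have hacd := hD.lt_iff_of_left (hab.trans hbc) hcd ⟨hat, htb.trans (D.x_strictMono hbc)⟩
    grind
  have hright : D.sig a b d = D.sig b c d → D.sig a c d = D.sig a b d := by
    have habd := hD.lt_iff_of_right hab (hbc.trans hcd) ⟨(D.x_strictMono hbc).trans hcu, hud⟩
    have hacd := hD.lt_iff_of_right (hab.trans hbc) hcd ⟨hcu, hud⟩
    have hbcd := hD.lt_iff_of_right hbc hcd ⟨hcu, hud⟩
    grind
  exact Sig.allowedForm_iff.2 ⟨hleft, hright⟩

end XMonotoneDrawing

theorem semisimple_monotone_Elele_lower_bound_general {n : ℕ}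
    {σ : Fin n → Fin n → Fin n → Bool} (hσ : Sig.Admissible σ) (k : ℕ) (hk : 2 * k + 2 < n) :
    3 * (k + 3).choose 3 ≤ Sig.Elele σ k := by
  rw [Sig.Elele_eq_edgeWeight]
  exact hσ.le_edgeWeight (by omega)

/-- Let `n ≥ 3` and let `D` be a semisimple x-monotone drawing of `K n`.
For every integer `k` with `0 ≤ k < n/2 − 1` (i.e. `2k + 2 < n`),
`E_{≤≤k}(D) ≥ 3·C(k+3, 3)`. -/
theorem semisimple_monotone_Elele_lower_bound (n : ℕ) (hn : 3 ≤ n)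
    (D : XMonotoneDrawing n) (hD : D.Semisimple) (k : ℕ) (hk : 2 * k + 2 < n) :
    3 * (k + 3).choose 3 ≤ Sig.Elele D.sig k :=
  semisimple_monotone_Elele_lower_bound_general hD.admissible_sig k hk
end

section
/- Let D be a weakly semisimple x-monotone drawing of K_n. Then there is a semisimple x-monotone drawing D' of K_n with the same vertex coordinates x_1 < ... < x_n such that: (1) σ_{D'} = σ_D (the same above/below relations of vertices and edges); (2) for every pair of edges, the parity of their number of crossings in D' equals the parity in D; and (3) for each vertex v_i and each pair of edges incident to v_i, the vertical order of the two edges in a sufficiently small punctured neighborhood to the right of v_i (respectively, to the left of v_i) is the same in D and D' (i.e., D and D' have the same rotation system). -/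
/-!
By the intermediate value theorem the parity of the number of crossings of two edges is determined
by their vertical orders at the two ends of their common interval. If the edges do not share the
vertex at an end, the order there is recorded by the signature. If they do share a vertex and cross
evenly, then their order near that vertex agrees with the order at the other end, which is again
recorded by the signature. Hence the signature `σ` of a weakly semisimple drawing determines all
parities and rotations, and the orders it prescribes around each vertex are transitive.

Conversely, let `σ` be locally transitive, and say that an edge over `v m` is forced below another
one when they share an endpoint at which `σ` puts it below. Forcing has no infinite descent: local
transitivity reroutes any descent away from the last right endpoint it uses. So the edges over each
`v m` can be given distinct heights that respect forcing and have the signs prescribed by `σ`.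
Joining these heights linearly yields polylines in which adjacent edges never cross.
-/

open Filter Topology

/-- The zeros of `f` in the open interval `(p, q)`. -/
def zerosIn (f : ℝ → ℝ) (p q : ℝ) : Set ℝ :=
  {t ∈ Set.Ioo p q | f t = 0}

/-- `f` is continuous on `[p, q]` and crosses zero properly on `(p, q)`: it has finitely many zeros
there and changes sign at each of them. -/
structure ProperZeros (f : ℝ → ℝ) (p q : ℝ) : Prop where
  continuousOn : ContinuousOn f (Set.Icc p q)
  finite : (zerosIn f p q).Finite
  sign_change : ∀ t ∈ zerosIn f p q, ∃ ε > 0, ∀ s ∈ Set.Ioo p t, t - ε < s →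
    ∀ u ∈ Set.Ioo t q, u < t + ε → f s * f u < 0

section Parity

variable {f : ℝ → ℝ} {p q : ℝ}

theorem zerosIn_subset_zerosIn {p' q' : ℝ} (hp : p ≤ p') (hq : q' ≤ q) :
    zerosIn f p' q' ⊆ zerosIn f p q :=
  fun _ ht => ⟨Set.Ioo_subset_Ioo hp hq ht.1, ht.2⟩

theorem ProperZeros.mono {p' q' : ℝ} (h : ProperZeros f p q) (hp : p ≤ p') (hq : q' ≤ q) :
    ProperZeros f p' q' where
  continuousOn := h.continuousOn.mono (Set.Icc_subset_Icc hp hq)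
  finite := h.finite.subset (zerosIn_subset_zerosIn hp hq)
  sign_change t ht := by
    obtain ⟨ε, hε, hsign⟩ := h.sign_change t (zerosIn_subset_zerosIn hp hq ht)
    exact ⟨ε, hε, fun s hs hsε u hu => hsign s (Set.Ioo_subset_Ioo_left hp hs) hsε u
      (Set.Ioo_subset_Ioo_right hq hu)⟩

theorem properZeros_of_le (hqp : q ≤ p) : ProperZeros f p q where
  continuousOn := (Set.subsingleton_Icc_of_ge hqp).continuousOn f
  finite := by simp [zerosIn, Set.Ioo_eq_empty_of_le hqp]
  sign_change t ht := absurd (ht.1.1.trans ht.1.2) hqp.not_gt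

theorem neg_iff_neg_of_zerosIn_eq_empty (hpq : p ≤ q) (hf : ContinuousOn f (Set.Icc p q))
    (hp : f p ≠ 0) (hq : f q ≠ 0) (hempty : zerosIn f p q = ∅) : f p < 0 ↔ f q < 0 := by
  rw [← Set.uIcc_of_le hpq] at hf
  have hzero : (0 : ℝ) ∉ Set.uIcc (f p) (f q) := fun h0 => by
    obtain ⟨t, ht, hft⟩ := intermediate_value_uIcc hf h0
    rw [Set.uIcc_of_le hpq] at ht
    have htp : t ≠ p := fun h => hp (h ▸ hft)
    have htq : t ≠ q := fun h => hq (h ▸ hft)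
    exact hempty.subset ⟨⟨ht.1.lt_of_ne' htp, ht.2.lt_of_ne htq⟩, hft⟩
  rw [Set.mem_uIcc] at hzero
  grind

theorem eventually_nhdsGT_zerosIn_eq (hfin : (zerosIn f p q).Finite) :
    ∀ᶠ u in 𝓝[>] p, zerosIn f u q = zerosIn f p q := by
  have hlt : ∀ᶠ u in 𝓝[>] p, ∀ z ∈ zerosIn f p q, u < z :=
    (Filter.eventually_all_finite hfin).2 fun z hz =>
      eventually_nhdsWithin_of_eventually_nhds (eventually_lt_nhds hz.1.1)
  filter_upwards [hlt, self_mem_nhdsWithin] with u hu hpu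
  exact (zerosIn_subset_zerosIn hpu.le le_rfl).antisymm fun z hz => ⟨⟨hu z hz, hz.1.2⟩, hz.2⟩

theorem eventually_nhdsLT_zerosIn_eq (hfin : (zerosIn f p q).Finite) :
    ∀ᶠ u in 𝓝[<] q, zerosIn f p u = zerosIn f p q := by
  have hlt : ∀ᶠ u in 𝓝[<] q, ∀ z ∈ zerosIn f p q, z < u :=
    (Filter.eventually_all_finite hfin).2 fun z hz =>
      eventually_nhdsWithin_of_eventually_nhds (eventually_gt_nhds hz.1.2)
  filter_upwards [hlt, self_mem_nhdsWithin] with u hu huq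
  exact (zerosIn_subset_zerosIn le_rfl huq.le).antisymm fun z hz => ⟨⟨hz.1.1, hu z hz⟩, hz.2⟩

theorem ne_zero_of_zerosIn_eq {u : ℝ} (hu : u ∈ Set.Ioo p q)
    (h : zerosIn f u q = zerosIn f p q ∨ zerosIn f p u = zerosIn f p q) : f u ≠ 0 := fun h0 =>
  have hmem : u ∈ zerosIn f p q := ⟨hu, h0⟩
  h.elim (fun h => lt_irrefl u (h ▸ hmem).1.1) (fun h => lt_irrefl u (h ▸ hmem).1.2)

theorem ProperZeros.exists_beyond_first_zero (h : ProperZeros f p q) (hp : f p ≠ 0)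
    (hne : (zerosIn f p q).Nonempty) :
    ∃ t ∈ zerosIn f p q, ∃ u ∈ Set.Ioo t q, zerosIn f u q = zerosIn f p q \ {t} ∧ f u ≠ 0 ∧
      (f p < 0 ↔ ¬ f u < 0) := by
  obtain ⟨t, ht, hmin⟩ := Set.exists_min_image _ id h.finite hne
  obtain ⟨ε, hε, hsign⟩ := h.sign_change t ht
  obtain ⟨s, hs, hsε⟩ : ∃ s ∈ Set.Ioo p t, t - ε < s := by
    obtain ⟨s, hs, hst⟩ := exists_between (max_lt ht.1.1 (sub_lt_self t hε))
    exact ⟨s, ⟨(le_max_left _ _).trans_lt hs, hst⟩, (le_max_right _ _).trans_lt hs⟩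
  have hright : zerosIn f t q = zerosIn f p q \ {t} := by
    ext z
    refine ⟨fun hz => ⟨zerosIn_subset_zerosIn ht.1.1.le le_rfl hz, hz.1.1.ne'⟩, fun hz => ?_⟩
    exact ⟨⟨(hmin z hz.1).lt_of_ne' hz.2, hz.1.1.2⟩, hz.1.2⟩
  obtain ⟨u, hzeros, huε, hu⟩ := ((eventually_nhdsGT_zerosIn_eq
    (h.mono ht.1.1.le le_rfl).finite).and <| (eventually_nhdsWithin_of_eventually_nhds <|
      eventually_lt_nhds (lt_add_of_pos_right t hε)).and (Ioo_mem_nhdsGT ht.1.2)).exists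
  have hsu : f s * f u < 0 := hsign s hs hsε u hu huε
  have hps : f p < 0 ↔ f s < 0 := by
    refine neg_iff_neg_of_zerosIn_eq_empty hs.1.le (h.continuousOn.mono
      (Set.Icc_subset_Icc_right (hs.2.trans ht.1.2).le)) hp (left_ne_zero_of_mul hsu.ne) ?_
    exact Set.eq_empty_of_forall_notMem fun z hz => (hmin z (zerosIn_subset_zerosIn le_rfl
      (hs.2.trans ht.1.2).le hz)).not_gt (hz.1.2.trans hs.2)
  refine ⟨t, ht, u, hu, hzeros.trans hright, ne_zero_of_zerosIn_eq hu (.inl hzeros), ?_⟩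
  rw [hps]
  grind [mul_neg_iff]

theorem ProperZeros.even_ncard_zerosIn_iff (h : ProperZeros f p q) (hpq : p ≤ q) (hp : f p ≠ 0)
    (hq : f q ≠ 0) : Even (zerosIn f p q).ncard ↔ (f p < 0 ↔ f q < 0) := by
  induction hN : (zerosIn f p q).ncard generalizing p with
  | zero =>
    rw [Set.ncard_eq_zero h.finite] at hN
    simpa using neg_iff_neg_of_zerosIn_eq_empty hpq h.continuousOn hp hq hN
  | succ N ih =>
    have hne : (zerosIn f p q).Nonempty := Set.nonempty_of_ncard_ne_zero (by omega)
    obtain ⟨t, ht, u, hu, hzeros, hfu, hsign⟩ := h.exists_beyond_first_zero hp hne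
    have hcard : (zerosIn f u q).ncard = N := by
      rw [hzeros, Set.ncard_sdiff_singleton_of_mem ht, hN, Nat.add_sub_cancel]
    rw [Nat.even_add_one, ih (h.mono (ht.1.1.trans hu.1).le le_rfl) hu.2.le hfu hcard]
    tauto

theorem ProperZeros.eventually_nhdsGT_neg_iff (h : ProperZeros f p q) (hpq : p < q)
    (hq : f q ≠ 0) (heven : Even (zerosIn f p q).ncard) : ∀ᶠ t in 𝓝[>] p, f t < 0 ↔ f q < 0 := by
  filter_upwards [eventually_nhdsGT_zerosIn_eq h.finite, Ioo_mem_nhdsGT hpq] with t hzeros ht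
  rw [← (h.mono ht.1.le le_rfl).even_ncard_zerosIn_iff ht.2.le
    (ne_zero_of_zerosIn_eq ht (.inl hzeros)) hq, hzeros]
  exact heven

theorem ProperZeros.eventually_nhdsLT_neg_iff (h : ProperZeros f p q) (hpq : p < q)
    (hp : f p ≠ 0) (heven : Even (zerosIn f p q).ncard) : ∀ᶠ t in 𝓝[<] q, f t < 0 ↔ f p < 0 := by
  filter_upwards [eventually_nhdsLT_zerosIn_eq h.finite, Ioo_mem_nhdsLT hpq] with t hzeros ht
  rw [iff_comm, ← (h.mono le_rfl ht.2.le).even_ncard_zerosIn_iff ht.1.le hp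
    (ne_zero_of_zerosIn_eq ht (.inr hzeros)), hzeros]
  exact heven

end Parity

namespace Sig

variable {n : ℕ} {σ : Fin n → Fin n → Fin n → Bool}

/-- `σ` places `{i, j}` below `{k, l}` at the left end of their common interval. Where that end is
`v i`, say, this asks for `v i` to be below `{k, l}`. -/
def LeftBelow (σ : Fin n → Fin n → Fin n → Bool) (i j k l : Fin n) : Prop :=
  (k < i ∧ σ k i l = true) ∨ (i < k ∧ σ i k j = false)

/-- `σ` places `{i, j}` below `{k, l}` at the right end of their common interval. -/
def RightBelow (σ : Fin n → Fin n → Fin n → Bool) (i j k l : Fin n) : Prop :=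
  (j < l ∧ σ k j l = true) ∨ (l < j ∧ σ i l j = false)

/-- The counterpart of `Below` at a right endpoint: by `σ`, the edge `{i, k}` arrives at `v k` below
the edge `{l, k}`. -/
def ArrivesBelow (σ : Fin n → Fin n → Fin n → Bool) (k i l : Fin n) : Prop :=
  LeftBelow σ i k l k

theorem Below.asymm {i j l : Fin n} (h : Below σ i j l) : ¬ Below σ i l j := by
  grind [Below]

theorem ArrivesBelow.asymm {k i l : Fin n} (h : ArrivesBelow σ k i l) : ¬ ArrivesBelow σ k l i := by
  grind [ArrivesBelow, LeftBelow]

theorem Below.ne {i j l : Fin n} (h : Below σ i j l) : j ≠ l := by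
  rintro rfl
  exact h.asymm h

theorem ArrivesBelow.ne {k i l : Fin n} (h : ArrivesBelow σ k i l) : i ≠ l := by
  rintro rfl
  exact h.asymm h

theorem below_or_below (i : Fin n) {j l : Fin n} (h : j ≠ l) : Below σ i j l ∨ Below σ i l j := by
  grind [Below]

theorem arrivesBelow_or_arrivesBelow (k : Fin n) {i l : Fin n} (h : i ≠ l) :
    ArrivesBelow σ k i l ∨ ArrivesBelow σ k l i := by
  grind [ArrivesBelow, LeftBelow]

theorem below_iff_of_lt {i j l : Fin n} (h : j < l) : Below σ i j l ↔ σ i j l = true := by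
  grind [Below]

theorem arrivesBelow_iff_of_gt {k i l : Fin n} (h : l < i) :
    ArrivesBelow σ k i l ↔ σ l i k = true := by
  grind [ArrivesBelow, LeftBelow]

/-- Both sides say that `v j` is below the edge `{i, k}`. -/
theorem below_iff_arrivesBelow {i j k : Fin n} (hij : i < j) (hjk : j < k) :
    Below σ i j k ↔ ArrivesBelow σ k j i := by
  rw [below_iff_of_lt hjk, arrivesBelow_iff_of_gt hij]

theorem below_swap_iff_arrivesBelow_swap {i j k : Fin n} (hij : i < j) (hjk : j < k) :
    Below σ i k j ↔ ArrivesBelow σ k i j := by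
  grind [Below, ArrivesBelow, LeftBelow]

/-- The vertical orders that `σ` prescribes for the edges leaving a vertex to the right and for
those arriving from the left are transitive. -/
structure LocallyTransitive (σ : Fin n → Fin n → Fin n → Bool) : Prop where
  below_trans : ∀ {i j k l : Fin n}, i < j → i < k → i < l →
    Below σ i j k → Below σ i k l → Below σ i j l
  arrivesBelow_trans : ∀ {k a b c : Fin n}, a < k → b < k → c < k →
    ArrivesBelow σ k a b → ArrivesBelow σ k b c → ArrivesBelow σ k a c

/-- The relation on the edges over `v m` that forces the first one to pass below the second one at
`v m` in a drawing without adjacent crossings. An edge `{i, j}` is the pair `(i, j)`. -/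
inductive ForcedBelow (σ : Fin n → Fin n → Fin n → Bool) (m : Fin n) :
    Fin n × Fin n → Fin n × Fin n → Prop
  | common_left {i j l : Fin n} (hi : i < m) (hj : m < j) (hl : m < l) (h : Below σ i j l) :
      ForcedBelow σ m (i, j) (i, l)
  | common_right {i k j : Fin n} (hi : i < m) (hk : k < m) (hj : m < j)
      (h : ArrivesBelow σ j i k) : ForcedBelow σ m (i, j) (k, j)

namespace LocallyTransitive

variable {m : Fin n}

/-- The upward chain `ak`, `ac`, `bc`, `bj` is rerouted away from `c`, as `ak`, `aj`, `bj` or as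
`ak`, `bk`, `bj`. -/
theorem bypass (hσ : LocallyTransitive σ) {a b k j c : Fin n} (ha : a < m) (hb : b < m)
    (hk : m < k) (hj : m < j) (hkc : k < c) (hjc : j < c) (hakc : Below σ a k c)
    (hcab : ArrivesBelow σ c a b) (hbcj : Below σ b c j) :
    (Below σ a k j ∧ ArrivesBelow σ j a b) ∨ (ArrivesBelow σ k a b ∧ Below σ b k j) := by
  have hak := ha.trans hk; have haj := ha.trans hj; have hbk := hb.trans hk
  have hbj := hb.trans hj; have hac := hak.trans hkc; have hbc := hbk.trans hkc
  have hcka : ArrivesBelow σ c k a := (below_iff_arrivesBelow hak hkc).1 hakc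
  have hcbj : ArrivesBelow σ c b j := (below_swap_iff_arrivesBelow_swap hbj hjc).1 hbcj
  have hbkc : Below σ b k c :=
    (below_iff_arrivesBelow hbk hkc).2 (hσ.arrivesBelow_trans hkc hac hbc hcka hcab)
  have hacj : Below σ a c j :=
    (below_swap_iff_arrivesBelow_swap haj hjc).2 (hσ.arrivesBelow_trans hac hbc hjc hcab hcbj)
  have hakj : Below σ a k j := hσ.below_trans hak hac haj hakc hacj
  have hbkj : Below σ b k j := hσ.below_trans hbk hbc hbj hbkc hbcj
  by_contra hnot
  have hjba : ArrivesBelow σ j b a :=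
    (arrivesBelow_or_arrivesBelow j hcab.ne).resolve_left fun h => hnot (.inl ⟨hakj, h⟩)
  have hkba : ArrivesBelow σ k b a :=
    (arrivesBelow_or_arrivesBelow k hcab.ne).resolve_left fun h => hnot (.inr ⟨h, hbkj⟩)
  rcases hcab.ne.lt_or_gt with hlt | hlt
  · have hacb : Below σ a c b := (below_swap_iff_arrivesBelow_swap hlt hbc).2 hcab
    have hakb : Below σ a k b := hσ.below_trans hak hac hlt hakc hacb
    exact hakb.asymm ((below_iff_arrivesBelow hlt hbk).2 hkba)
  · have hbja : Below σ b j a := (below_swap_iff_arrivesBelow_swap hlt haj).2 hjba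
    have hbac : Below σ b a c := (below_iff_arrivesBelow hlt hac).2 hcab
    have hbcc : Below σ b c a := hσ.below_trans hbc hbj hlt hbcj hbja
    exact hbac.asymm hbcc

theorem wellFounded_arrivesBelow (hσ : LocallyTransitive σ) (c : Fin n) :
    WellFounded fun a b : Set.Iio c => ArrivesBelow σ c a b :=
  have : IsTrans (Set.Iio c) fun a b => ArrivesBelow σ c a b :=
    ⟨fun p q r => hσ.arrivesBelow_trans p.2 q.2 r.2⟩
  have : Std.Irrefl fun a b : Set.Iio c => ArrivesBelow σ c a b := ⟨fun _ h => h.asymm h⟩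
  Finite.wellFounded_of_trans_of_irrefl _

section Descent

variable {A : Set (Fin n × Fin n)} {c : Fin n}

theorem exists_entry (hσ : LocallyTransitive σ) (hA : ∀ q ∈ A, ∃ p ∈ A, ForcedBelow σ m p q)
    (hc : ∀ q ∈ A, q.2 ≤ c) (b : Set.Iio c) (hb : (b.1, c) ∈ A) :
    ∃ a k, (a, k) ∈ A ∧ a < m ∧ m < k ∧ k < c ∧ Below σ a k c ∧
      (a = b ∨ ArrivesBelow σ c a b) := by
  induction b using (hσ.wellFounded_arrivesBelow c).induction with
  | _ b ih =>
  obtain ⟨p, hp, hpb⟩ := hA _ hb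
  cases hpb with
  | @common_left _ k _ hi hk hl h =>
    exact ⟨b, k, hp, hi, hk, (hc _ hp).lt_of_ne h.ne, h, .inl rfl⟩
  | @common_right a' _ _ hi hk hj h =>
    obtain ⟨a, k, hak, ham, hmk, hkc, hbelow, ha⟩ := ih ⟨a', hi.trans hj⟩ h hp
    refine ⟨a, k, hak, ham, hmk, hkc, hbelow, .inr ?_⟩
    rcases ha with rfl | ha
    · exact h
    · exact hσ.arrivesBelow_trans (ham.trans hj) (hi.trans hj) (hk.trans hj) ha h

theorem exists_detour (hσ : LocallyTransitive σ) (hA : ∀ q ∈ A, ∃ p ∈ A, ForcedBelow σ m p q)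
    (hc : ∀ q ∈ A, q.2 ≤ c) {q : Fin n × Fin n} (hqA : q ∈ A) (hq : q.2 < c) :
    ∃ p, p.2 < c ∧ (p ∈ A ∨ ∃ r ∈ A, r.2 < c ∧ ForcedBelow σ m r p) ∧ ForcedBelow σ m p q := by
  obtain ⟨p, hp, hpq⟩ := hA q hqA
  rcases (hc p hp).lt_or_eq with hpc | hpc
  · exact ⟨p, hpc, .inl hp, hpq⟩
  cases hpq with
  | common_right => exact absurd hpc hq.ne
  | @common_left b _ j hb hmc hmj hbcj =>
    subst hpc
    obtain ⟨a, k, hak, ham, hmk, hkc, hakc, rfl | hcab⟩ :=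
      hσ.exists_entry hA hc ⟨b, hb.trans hmc⟩ hp
    · exact ⟨(a, k), hkc, .inl hak, .common_left ham hmk hmj <| hσ.below_trans (ham.trans hmk)
        (ham.trans hmc) (ham.trans hmj) hakc hbcj⟩
    · rcases hσ.bypass ham hb hmk hmj hkc hq hakc hcab hbcj with ⟨hakj, hjab⟩ | ⟨hkab, hbkj⟩
      · exact ⟨(a, j), hq, .inr ⟨_, hak, hkc, .common_left ham hmk hmj hakj⟩,
          .common_right ham hb hmj hjab⟩
      · exact ⟨(b, k), hkc, .inr ⟨_, hak, hkc, .common_right ham hb hmk hkab⟩,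
          .common_left hb hmk hmj hbkj⟩

theorem exists_descending_of_le (hσ : LocallyTransitive σ) (hne : A.Nonempty)
    (hA : ∀ q ∈ A, ∃ p ∈ A, ForcedBelow σ m p q) (hc : ∀ q ∈ A, q.2 ≤ c) :
    ∃ A' : Set (Fin n × Fin n), A'.Nonempty ∧ (∀ q ∈ A', ∃ p ∈ A', ForcedBelow σ m p q) ∧
      ∀ q ∈ A', q.2 < c := by
  -- A detour may leave `A`, but only through pairs above some element of `A`.
  refine ⟨{q | q.2 < c ∧ (q ∈ A ∨ ∃ r ∈ A, r.2 < c ∧ ForcedBelow σ m r q)}, ?_, ?_,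
    fun q hq => hq.1⟩
  · obtain ⟨⟨b, j⟩, hq⟩ := hne
    rcases (hc _ hq).lt_or_eq with hjc | rfl
    · exact ⟨(b, j), hjc, .inl hq⟩
    · have hbj : b < j := by
        obtain ⟨p, -, hp⟩ := hA _ hq
        cases hp with
        | common_left hi hj hl => exact hi.trans hl
        | common_right hi hk hj => exact hk.trans hj
      obtain ⟨a, k, hak, -, -, hkc, -⟩ := hσ.exists_entry hA hc ⟨b, hbj⟩ hq
      exact ⟨(a, k), hkc, .inl hak⟩
  · rintro q ⟨hqc, hq | ⟨p, hp, hpc, hpq⟩⟩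
    · obtain ⟨p, hpc, hp, hpq⟩ := hσ.exists_detour hA hc hq hqc
      exact ⟨p, ⟨hpc, hp⟩, hpq⟩
    · exact ⟨p, ⟨hpc, .inl hp⟩, hpq⟩

end Descent

theorem wellFounded_forcedBelow (hσ : LocallyTransitive σ) (m : Fin n) :
    WellFounded (ForcedBelow σ m) := by
  have hbound : ∀ (c : Fin n) (A : Set (Fin n × Fin n)), A.Nonempty → (∀ q ∈ A, q.2 ≤ c) →
      ∃ q ∈ A, ∀ p ∈ A, ¬ ForcedBelow σ m p q := by
    intro c
    induction c using WellFoundedLT.induction with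
    | ind c ih =>
      intro A hne hc
      by_contra! hA
      obtain ⟨A', hne', hA', hc'⟩ := hσ.exists_descending_of_le hne hA hc
      obtain ⟨p, hp, hmax⟩ := Set.exists_max_image A' Prod.snd A'.toFinite hne'
      obtain ⟨q, hq, hmin⟩ := ih p.2 (hc' p hp) A' hne' hmax
      obtain ⟨r, hr, hrq⟩ := hA' q hq
      exact hmin r hr hrq
  refine WellFounded.wellFounded_iff_has_min.2 fun A hne => ?_
  obtain ⟨p, -, hmax⟩ := Set.exists_max_image A Prod.snd A.toFinite hne
  exact hbound p.2 A hne hmax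

end LocallyTransitive

theorem ForcedBelow.sign_mono (hσ : LocallyTransitive σ) {m : Fin n} {p q : Fin n × Fin n}
    (h : ForcedBelow σ m p q) (hp : σ p.1 m p.2 = true) : σ q.1 m q.2 = true := by
  cases h with
  | common_left hi hj hl h =>
    rw [← below_iff_of_lt hj] at hp
    exact (below_iff_of_lt hl).1 (hσ.below_trans hi (hi.trans hj) (hi.trans hl) hp h)
  | common_right hi hk hj h =>
    rw [← arrivesBelow_iff_of_gt hi] at hp
    exact (arrivesBelow_iff_of_gt hk).1 (hσ.arrivesBelow_trans hj (hi.trans hj) (hk.trans hj) hp h)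

end Sig

theorem exists_injective_height_of_wellFounded {P : Type*} [Countable P] {r : P → P → Prop}
    (hr : WellFounded r) (pos : P → Prop) (hpos : ∀ p q, r p q → pos p → pos q) :
    ∃ g : P → ℝ, Function.Injective g ∧ (∀ p q, r p q → g p < g q) ∧
      (∀ p, pos p → 0 < g p) ∧ ∀ p, ¬ pos p → g p < 0 := by
  classical
  have : IsWellFounded P r := ⟨hr⟩
  let : LinearOrder P := IsWellFounded.wellOrderExtension r
  have : Nontrivial (Set.Ioo (0 : ℝ) 1) := (Set.Ioo_infinite one_pos).nontrivial.coe_sort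
  obtain ⟨h⟩ := Order.embedding_from_countable_to_dense P (Set.Ioo (0 : ℝ) 1)
  have hlt : ∀ {p q}, r p q → (h p : ℝ) < h q := fun hpq =>
    h.strictMono (Prod.Lex.left _ _ (IsWellFounded.rank_lt_of_rel hpq))
  refine ⟨fun p => if pos p then (h p : ℝ) else h p - 1, fun p q hpq => ?_, fun p q hpq => ?_,
    fun p hp => ?_, fun p hp => ?_⟩
  · have := (h p).2.1; have := (h p).2.2; have := (h q).2.1; have := (h q).2.2
    refine h.injective (Subtype.ext ?_)
    grind
  · have := hlt hpq; have := hpos p q hpq; have := (h p).2.2; have := (h q).2.1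
    grind
  · simpa only [if_pos hp] using (h p).2.1
  · simpa only [if_neg hp, sub_neg] using (h p).2.2

/-- `g` is continuous and interpolates linearly between the points `(x m, H m)` that are
consecutive for the order of `ι`. Nothing is prescribed outside the range of the nodes `x m`. -/
structure IsPolyline {ι : Type*} [LinearOrder ι] (x H : ι → ℝ) (g : ℝ → ℝ) : Prop where
  continuous : Continuous g
  apply_node : ∀ m, g (x m) = H m
  eq_lineMap : ∀ {m m'}, m ⋖ m' → ∀ t ∈ Set.Icc (x m) (x m'),
    g t = AffineMap.lineMap (H m) (H m') ((t - x m) / (x m' - x m))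

section Polyline

variable {ι : Type*} [LinearOrder ι] {x : ι → ℝ} {H K : ι → ℝ} {f g : ℝ → ℝ}

theorem exists_continuous_extend_by_lineMap (hg : Continuous g) (p q v : ℝ) :
    ∃ g' : ℝ → ℝ, Continuous g' ∧ (∀ t ≤ p, g' t = g t) ∧
      ∀ t, p ≤ t → g' t = AffineMap.lineMap (g p) v ((t - p) / (q - p)) := by
  let l : ℝ → ℝ := fun t => AffineMap.lineMap (g p) v ((t - p) / (q - p))
  have hl : Continuous l := AffineMap.lineMap_continuous.comp (by fun_prop)
  have hp : g p = l p := by simp [l]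
  refine ⟨fun t => if t ≤ p then g t else l t, hg.if_le hl continuous_id continuous_const
    fun t ht => ?_, fun t ht => if_pos ht, fun t ht => ?_⟩
  · rw [ht, hp]
  · rcases ht.eq_or_lt with rfl | ht
    · exact (if_pos le_rfl).trans hp
    · exact if_neg ht.not_ge

theorem exists_continuous_interpolation (hx : StrictMono x) (H : ι → ℝ) (s : Finset ι) :
    ∃ g : ℝ → ℝ, Continuous g ∧ (∀ m ∈ s, g (x m) = H m) ∧
      ∀ m ∈ s, ∀ m' ∈ s, m < m' → (∀ c ∈ s, c ≤ m ∨ m' ≤ c) → ∀ t ∈ Set.Icc (x m) (x m'),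
        g t = AffineMap.lineMap (H m) (H m') ((t - x m) / (x m' - x m)) := by
  induction s using Finset.induction_on_max with
  | empty => exact ⟨0, continuous_const, by simp, by simp⟩
  | insert c s hc ih =>
    obtain ⟨g, hg, hnode, hline⟩ := ih
    rcases s.eq_empty_or_nonempty with rfl | hs
    · exact ⟨fun _ => H c, continuous_const, by simp, by simp⟩
    obtain ⟨d, hd, hmax : ∀ m ∈ s, m ≤ d⟩ := s.exists_max_image id hs
    have hdc : x d < x c := hx (hc d hd)
    obtain ⟨g', hg', hleft, hright⟩ := exists_continuous_extend_by_lineMap hg (x d) (x c) (H c)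
    rw [hnode d hd] at hright
    refine ⟨g', hg', fun m hm => ?_, fun m hm m' hm' hlt hcov t ht => ?_⟩
    · rcases Finset.mem_insert.1 hm with rfl | hm
      · rw [hright _ hdc.le, div_self (sub_pos.2 hdc).ne', AffineMap.lineMap_apply_one]
      · rw [hleft _ (hx.monotone (hmax m hm)), hnode m hm]
    · have hms : m ∈ s := (Finset.mem_insert.1 hm).resolve_left fun h =>
        (Finset.mem_insert.1 hm').elim (fun h' => hlt.ne (h.trans h'.symm))
          fun h' => (h ▸ hlt).not_gt (hc _ h')
      rcases Finset.mem_insert.1 hm' with rfl | hm's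
      · obtain rfl : m = d := (hmax m hms).antisymm <|
          (hcov d (Finset.mem_insert_of_mem hd)).resolve_right (hc d hd).not_ge
        exact hright t ht.1
      · rw [hleft t (ht.2.trans (hx.monotone (hmax m' hm's)))]
        exact hline m hms m' hm's hlt (fun c hc => hcov c (Finset.mem_insert_of_mem hc)) t ht

theorem exists_isPolyline [Finite ι] (hx : StrictMono x) (H : ι → ℝ) : ∃ g, IsPolyline x H g := by
  have := Fintype.ofFinite ι
  obtain ⟨g, hg, hnode, hline⟩ := exists_continuous_interpolation hx H Finset.univ
  exact ⟨g, hg, fun m => hnode m (Finset.mem_univ m), fun h => hline _ (Finset.mem_univ _) _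
    (Finset.mem_univ _) h.lt fun _ _ => (le_or_gt _ _).imp_right h.ge_of_gt⟩

theorem ne_zero_or_ne_zero_of_covBy {a b m m' : ι} (hint : ∀ m ∈ Set.Ioo a b, H m ≠ 0)
    (hab : H a ≠ 0 ∨ H b ≠ 0) (h : m ⋖ m') (ha : a ≤ m) (hb : m' ≤ b) : H m ≠ 0 ∨ H m' ≠ 0 := by
  rcases ha.eq_or_lt with rfl | ha
  · rcases hb.eq_or_lt with rfl | hb
    · exact hab
    · exact .inr (hint m' ⟨h.lt, hb⟩)
  · exact .inl (hint m ⟨ha, h.lt.trans_le hb⟩)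

theorem exists_covBy_mem_Ico [Finite ι] (hx : StrictMono x) {a b : ι} {t : ℝ}
    (ht : t ∈ Set.Ico (x a) (x b)) :
    ∃ m m', m ⋖ m' ∧ a ≤ m ∧ m' ≤ b ∧ t ∈ Set.Ico (x m) (x m') := by
  obtain ⟨m, hmt, hmax⟩ := Set.exists_max_image {m | x m ≤ t} id (Set.toFinite _) ⟨a, ht.1⟩
  obtain ⟨m', hcov, hm'⟩ := exists_covBy_le_of_lt (hx.lt_iff_lt.1 (hmt.trans_lt ht.2))
  exact ⟨m, m', hcov, hmax a ht.1, hm', hmt,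
    lt_of_not_ge fun h => (hmax m' h).not_gt hcov.lt⟩

namespace IsPolyline

theorem sub (hf : IsPolyline x H f) (hg : IsPolyline x K g) :
    IsPolyline x (H - K) (f - g) where
  continuous := hf.continuous.sub hg.continuous
  apply_node m := congrArg₂ (· - ·) (hf.apply_node m) (hg.apply_node m)
  eq_lineMap h t ht := by
    simp only [Pi.sub_apply, hf.eq_lineMap h t ht, hg.eq_lineMap h t ht,
      AffineMap.lineMap_apply_ring]
    ring

theorem exists_slope_of_covBy (hg : IsPolyline x H g) {m m' : ι} (h : m ⋖ m') (hx : x m < x m')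
    (hne : H m ≠ 0 ∨ H m' ≠ 0) {t : ℝ} (ht : t ∈ Set.Icc (x m) (x m')) (hgt : g t = 0) :
    ∃ c ≠ 0, ∀ s ∈ Set.Icc (x m) (x m'), g s = c * (s - t) := by
  have hd : x m' - x m ≠ 0 := (sub_pos.2 hx).ne'
  have hline : ∀ s ∈ Set.Icc (x m) (x m'),
      g s = (H m' - H m) / (x m' - x m) * (s - t) := fun s hs => by
    have hs := hg.eq_lineMap h s hs
    have ht := hg.eq_lineMap h t ht
    rw [hgt] at ht
    rw [← sub_zero (g s), ht, hs, AffineMap.lineMap_apply_ring, AffineMap.lineMap_apply_ring]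
    field_simp
    ring
  refine ⟨_, fun hc => ?_, hline⟩
  have hm := hline (x m) (Set.left_mem_Icc.2 hx.le)
  have hm' := hline (x m') (Set.right_mem_Icc.2 hx.le)
  rw [hg.apply_node, hc, zero_mul] at hm hm'
  exact hne.elim (· hm) (· hm')

theorem pos [Finite ι] (hg : IsPolyline x H g) (hx : StrictMono x) {a b : ι}
    (hnonneg : ∀ m ∈ Set.Icc a b, 0 ≤ H m) (hint : ∀ m ∈ Set.Ioo a b, H m ≠ 0)
    (hab : H a ≠ 0 ∨ H b ≠ 0) {t : ℝ} (ht : t ∈ Set.Ioo (x a) (x b)) : 0 < g t := by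
  obtain ⟨m, m', hcov, ha, hb, htm⟩ := exists_covBy_mem_Ico hx (Set.Ioo_subset_Ico_self ht)
  have hm : 0 ≤ H m := hnonneg m ⟨ha, hcov.le.trans hb⟩
  have hm' : 0 ≤ H m' := hnonneg m' ⟨ha.trans hcov.le, hb⟩
  have hne := ne_zero_or_ne_zero_of_covBy hint hab hcov ha hb
  rcases htm.1.eq_or_lt with rfl | hlt
  · rw [hg.apply_node]
    exact hm.lt_of_ne' (hint m ⟨hx.lt_iff_lt.1 ht.1, hx.lt_iff_lt.1 ht.2⟩)
  · rw [hg.eq_lineMap hcov t ⟨htm.1, htm.2.le⟩, AffineMap.lineMap_apply_ring]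
    have hr0 : 0 < (t - x m) / (x m' - x m) := div_pos (sub_pos.2 hlt) (sub_pos.2 (hx hcov.lt))
    have hr1 : (t - x m) / (x m' - x m) < 1 :=
      (div_lt_one (sub_pos.2 (hx hcov.lt))).2 (sub_lt_sub_right htm.2 _)
    rcases hne with hne | hne
    · exact add_pos_of_pos_of_nonneg (mul_pos (sub_pos.2 hr1) (hm.lt_of_ne' hne)) (by positivity)
    · exact add_pos_of_nonneg_of_pos (mul_nonneg (sub_pos.2 hr1).le hm)
        (mul_pos hr0 (hm'.lt_of_ne' hne))

theorem finite_zerosIn [Finite ι] (hg : IsPolyline x H g) (hx : StrictMono x) {a b : ι}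
    (hint : ∀ m ∈ Set.Ioo a b, H m ≠ 0) (hab : H a ≠ 0 ∨ H b ≠ 0) :
    (zerosIn g (x a) (x b)).Finite := by
  let pieces : Set (ι × ι) := {p | p.1 ⋖ p.2 ∧ a ≤ p.1 ∧ p.2 ≤ b}
  have hpiece : ∀ p ∈ pieces, {t ∈ Set.Icc (x p.1) (x p.2) | g t = 0}.Finite := by
    rintro ⟨m, m'⟩ ⟨hcov, ha, hb⟩
    refine Set.Subsingleton.finite fun t ht s hs => ?_
    obtain ⟨c, hc, hslope⟩ := hg.exists_slope_of_covBy hcov (hx hcov.lt)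
      (ne_zero_or_ne_zero_of_covBy hint hab hcov ha hb) ht.1 ht.2
    have hst := hslope s hs.1
    rw [hs.2, eq_comm, mul_eq_zero, or_iff_right hc, sub_eq_zero] at hst
    exact hst.symm
  refine ((Set.toFinite pieces).biUnion hpiece).subset fun t ht => ?_
  obtain ⟨m, m', hcov, ha, hb, htm⟩ := exists_covBy_mem_Ico hx (Set.Ioo_subset_Ico_self ht.1)
  exact Set.mem_biUnion (x := (m, m')) ⟨hcov, ha, hb⟩ ⟨Set.Ico_subset_Icc_self htm, ht.2⟩

theorem properZeros [Finite ι] (hg : IsPolyline x H g) (hx : StrictMono x) {a b : ι}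
    (hint : ∀ m ∈ Set.Ioo a b, H m ≠ 0) (hab : H a ≠ 0 ∨ H b ≠ 0) :
    ProperZeros g (x a) (x b) where
  continuousOn := hg.continuous.continuousOn
  finite := hg.finite_zerosIn hx hint hab
  sign_change t ht := by
    obtain ⟨m, m', hcov, ha, hb, htm⟩ := exists_covBy_mem_Ico hx (Set.Ioo_subset_Ico_self ht.1)
    have hmt : x m < t := htm.1.lt_of_ne fun h => hint m
      ⟨hx.lt_iff_lt.1 (h ▸ ht.1.1), hcov.lt.trans_le hb⟩ (by rw [← hg.apply_node, h, ht.2])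
    obtain ⟨c, hc, hslope⟩ := hg.exists_slope_of_covBy hcov (hx hcov.lt)
      (ne_zero_or_ne_zero_of_covBy hint hab hcov ha hb) (Set.Ico_subset_Icc_self htm) ht.2
    refine ⟨min (t - x m) (x m' - t), lt_min (sub_pos.2 hmt) (sub_pos.2 htm.2),
      fun s hs hsε u hu huε => ?_⟩
    have hms : x m < s := by linarith [min_le_left (t - x m) (x m' - t)]
    have hum' : u < x m' := by linarith [min_le_right (t - x m) (x m' - t)]
    rw [hslope s ⟨hms.le, (hs.2.trans htm.2).le⟩, hslope u ⟨(hmt.trans hu.1).le, hum'.le⟩]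
    calc c * (s - t) * (c * (u - t)) = c ^ 2 * ((s - t) * (u - t)) := by ring
      _ < 0 := mul_neg_of_pos_of_neg (by positivity)
          (mul_neg_of_neg_of_pos (sub_neg.2 hs.2) (sub_pos.2 hu.1))

end IsPolyline

end Polyline

namespace Sig

variable {n : ℕ} {σ : Fin n → Fin n → Fin n → Bool}

/-- `V m i j` is a height for the edge `{i, j}` at `v m`: zero at the two endpoints, with the sign
prescribed by `σ` in between, distinct for distinct edges, and compatible with the orders that `σ`
prescribes at common endpoints. -/
structure IsHeight (σ : Fin n → Fin n → Fin n → Bool) (V : Fin n → Fin n → Fin n → ℝ) :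
    Prop where
  left : ∀ i j, V i i j = 0
  right : ∀ i j, V j i j = 0
  pos : ∀ {i m j}, i < m → m < j → σ i m j = true → 0 < V m i j
  neg : ∀ {i m j}, i < m → m < j → σ i m j = false → V m i j < 0
  injective : ∀ {m i j k l}, i < m → m < j → k < m → m < l → V m i j = V m k l → (i, j) = (k, l)
  lt_of_below : ∀ {m i j l}, i < m → m < j → m < l → Below σ i j l → V m i j < V m i l
  lt_of_arrivesBelow : ∀ {m i k j}, i < m → k < m → m < j → ArrivesBelow σ j i k →
    V m i j < V m k j

theorem LocallyTransitive.exists_isHeight (hσ : LocallyTransitive σ) : ∃ V, IsHeight σ V := by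
  have hex (m : Fin n) := exists_injective_height_of_wellFounded (hσ.wellFounded_forcedBelow m)
    (fun p => σ p.1 m p.2 = true) fun _ _ h => h.sign_mono hσ
  choose W hinj hmono hpos hneg using hex
  have hV : ∀ {i m j}, i < m → m < j → (if i < m ∧ m < j then W m (i, j) else 0) = W m (i, j) :=
    fun hi hj => if_pos ⟨hi, hj⟩
  refine ⟨fun m i j => if i < m ∧ m < j then W m (i, j) else 0, ?_, ?_, ?_, ?_, ?_, ?_, ?_⟩
  · exact fun i j => if_neg fun h => h.1.false
  · exact fun i j => if_neg fun h => h.2.false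
  · exact fun hi hj h => (hV hi hj).symm ▸ hpos _ _ h
  · exact fun hi hj h => (hV hi hj).symm ▸ hneg _ (_, _) (by simp [h])
  · exact fun hi hj hk hl h => hinj _ (by rwa [hV hi hj, hV hk hl] at h)
  · exact fun hi hj hl h => (hV hi hj).symm ▸ (hV hi hl).symm ▸
      hmono _ _ _ (.common_left hi hj hl h)
  · exact fun hi hk hj h => (hV hi hj).symm ▸ (hV hk hj).symm ▸
      hmono _ _ _ (.common_right hi hk hj h)

namespace IsHeight

variable {V : Fin n → Fin n → Fin n → ℝ}

theorem ne_zero (hV : IsHeight σ V) {i m j : Fin n} (hi : i < m) (hj : m < j) : V m i j ≠ 0 := by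
  cases hs : σ i m j
  · exact (hV.neg hi hj hs).ne
  · exact (hV.pos hi hj hs).ne'

theorem ne_at_max (hV : IsHeight σ V) {i j k l : Fin n} (h : max i k < min j l) (hik : i ≠ k) :
    V (max i k) i j ≠ V (max i k) k l := by
  rw [max_lt_iff, lt_min_iff, lt_min_iff] at h
  rcases hik.lt_or_gt with hlt | hlt
  · rw [max_eq_right hlt.le, hV.left]
    exact hV.ne_zero hlt h.2.1
  · rw [max_eq_left hlt.le, hV.left]
    exact (hV.ne_zero hlt h.1.2).symm

theorem ne_at_min (hV : IsHeight σ V) {i j k l : Fin n} (h : max i k < min j l) (hjl : j ≠ l) :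
    V (min j l) i j ≠ V (min j l) k l := by
  rw [max_lt_iff, lt_min_iff, lt_min_iff] at h
  rcases hjl.lt_or_gt with hlt | hlt
  · rw [min_eq_left hlt.le, hV.right]
    exact (hV.ne_zero h.2.1 hlt).symm
  · rw [min_eq_right hlt.le, hV.right]
    exact hV.ne_zero h.1.2 hlt

theorem ne_of_mem_Ioo (hV : IsHeight σ V) {i j k l m : Fin n} (hne : (i, j) ≠ (k, l))
    (hm : m ∈ Set.Ioo (max i k) (min j l)) : V m i j ≠ V m k l := fun h =>
  have ⟨hi, hk⟩ := max_lt_iff.1 hm.1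
  have ⟨hj, hl⟩ := lt_min_iff.1 hm.2
  hne (hV.injective hi hj hk hl h)

theorem le_of_below (hV : IsHeight σ V) {i j l m : Fin n} (hm : m ∈ Set.Icc i (min j l))
    (h : Below σ i j l) : V m i j ≤ V m i l := by
  obtain ⟨hj, hl⟩ := le_min_iff.1 hm.2
  rcases hm.1.eq_or_lt with rfl | hi
  · rw [hV.left, hV.left]
  rcases hj.eq_or_lt with rfl | hj
  · rcases hl.eq_or_lt with rfl | hl
    · rfl
    · exact hV.right i m ▸ (hV.pos hi hl ((below_iff_of_lt hl).1 h)).le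
  · rcases hl.eq_or_lt with rfl | hl
    · exact hV.right i m ▸ (hV.neg hi hj (by grind [Below])).le
    · exact (hV.lt_of_below hi hj hl h).le

theorem le_of_arrivesBelow (hV : IsHeight σ V) {i j k m : Fin n} (hm : m ∈ Set.Icc (max i k) j)
    (h : ArrivesBelow σ j i k) : V m i j ≤ V m k j := by
  obtain ⟨hi, hk⟩ := max_le_iff.1 hm.1
  rcases hm.2.eq_or_lt with rfl | hj
  · rw [hV.right, hV.right]
  rcases hi.eq_or_lt with rfl | hi
  · rcases hk.eq_or_lt with rfl | hk
    · rfl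
    · exact hV.left i j ▸ (hV.pos hk hj ((arrivesBelow_iff_of_gt hk).1 h)).le
  · rcases hk.eq_or_lt with rfl | hk
    · exact hV.left k j ▸ (hV.neg hi hj (by grind [ArrivesBelow, LeftBelow])).le
    · exact (hV.lt_of_arrivesBelow hi hk hj h).le

section Polyline

variable {x : Fin n → ℝ} {e : Fin n → Fin n → ℝ → ℝ} {i j k l : Fin n}

theorem apply_lt_of_below (hV : IsHeight σ V) (hx : StrictMono x)
    (he : ∀ i j, IsPolyline x (V · i j) (e i j)) (h : Below σ i j l) {t : ℝ}
    (ht : t ∈ Set.Ioo (x i) (x (min j l))) : e i j t < e i l t := by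
  have hlt : max i i < min l j := by
    rw [max_self, min_comm]; exact hx.lt_iff_lt.1 (ht.1.trans ht.2)
  refine sub_pos.1 (((he i l).sub (he i j)).pos hx (fun m hm => ?_) (fun m hm => ?_) (.inr ?_) ht)
  · exact sub_nonneg.2 (hV.le_of_below hm h)
  · exact sub_ne_zero.2 (hV.ne_of_mem_Ioo (by simpa using h.ne.symm)
      (by rwa [max_self, min_comm]))
  · exact sub_ne_zero.2 (min_comm l j ▸ hV.ne_at_min hlt h.ne.symm)

theorem apply_lt_of_arrivesBelow (hV : IsHeight σ V) (hx : StrictMono x)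
    (he : ∀ i j, IsPolyline x (V · i j) (e i j)) (h : ArrivesBelow σ j i k) {t : ℝ}
    (ht : t ∈ Set.Ioo (x (max i k)) (x j)) : e i j t < e k j t := by
  have hlt : max k i < min j j := by
    rw [min_self, max_comm]; exact hx.lt_iff_lt.1 (ht.1.trans ht.2)
  refine sub_pos.1 (((he k j).sub (he i j)).pos hx (fun m hm => ?_) (fun m hm => ?_) (.inl ?_) ht)
  · exact sub_nonneg.2 (hV.le_of_arrivesBelow hm h)
  · exact sub_ne_zero.2 (hV.ne_of_mem_Ioo (by simpa using h.ne.symm)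
      (by rwa [min_self, max_comm]))
  · exact sub_ne_zero.2 (max_comm k i ▸ hV.ne_at_max hlt h.ne.symm)

theorem properZeros_sub (hV : IsHeight σ V) (hx : StrictMono x)
    (he : ∀ i j, IsPolyline x (V · i j) (e i j)) (hne : (i, j) ≠ (k, l)) :
    ProperZeros (e i j - e k l) (x (max i k)) (x (min j l)) := by
  rcases lt_or_ge (max i k) (min j l) with h | h
  · refine ((he i j).sub (he k l)).properZeros hx
      (fun m hm => sub_ne_zero.2 (hV.ne_of_mem_Ioo hne hm)) ?_
    by_cases hik : i = k
    · exact .inr (sub_ne_zero.2 (hV.ne_at_min h fun hjl => hne (by rw [hik, hjl])))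
    · exact .inl (sub_ne_zero.2 (hV.ne_at_max h hik))
  · exact properZeros_of_le (hx.monotone h)

end Polyline

end IsHeight

end Sig

namespace XMonotoneDrawing

variable {n : ℕ} {σ : Fin n → Fin n → Fin n → Bool}

theorem setOf_crossing_eq_zerosIn {x : Fin n → ℝ} (hx : StrictMono x) (f g : ℝ → ℝ)
    (i j k l : Fin n) :
    {t | max (x i) (x k) < t ∧ t < min (x j) (x l) ∧ f t = g t} =
      zerosIn (f - g) (x (max i k)) (x (min j l)) := by
  ext t
  simp [zerosIn, hx.monotone.map_max, hx.monotone.map_min, sub_eq_zero, and_assoc]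

/-- The drawing whose edge `{i, j}` is the polyline with height `V m i j` at the vertex `v m`. -/
def ofPolylines {V : Fin n → Fin n → Fin n → ℝ} {x : Fin n → ℝ} {e : Fin n → Fin n → ℝ → ℝ}
    (hV : Sig.IsHeight σ V) (hx : StrictMono x) (he : ∀ i j, IsPolyline x (V · i j) (e i j)) :
    XMonotoneDrawing n where
  x := x
  x_strictMono := hx
  e := e
  cont i j _ := (he i j).continuous.continuousOn
  end_left i j _ := ((he i j).apply_node i).trans (hV.left i j)
  end_right i j _ := ((he i j).apply_node j).trans (hV.right i j)
  avoid_vertex i m j hi hj := ((he i j).apply_node m).trans_ne (hV.ne_zero hi hj)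
  cross_finite i j k l _ _ hne := by
    rw [setOf_crossing_eq_zerosIn hx]
    exact (hV.properZeros_sub hx he hne).finite
  sign_change i j k l _ _ hne t hmax hmin ht := by
    have hmem := (setOf_crossing_eq_zerosIn hx (e i j) (e k l) i j k l).subset ⟨hmax, hmin, ht⟩
    obtain ⟨ε, hε, hsign⟩ := (hV.properZeros_sub hx he hne).sign_change t hmem
    rw [hx.monotone.map_max, hx.monotone.map_min] at hsign
    exact ⟨ε, hε, fun s hs hsε hst u hu htu huε => hsign s ⟨hs, hst⟩ hsε u ⟨htu, hu⟩ huε⟩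

section Crossings

variable (D : XMonotoneDrawing n) {i j k l : Fin n}

theorem crossSet_eq_zerosIn (i j k l : Fin n) :
    D.crossSet i j k l = zerosIn (D.e i j - D.e k l) (D.x (max i k)) (D.x (min j l)) :=
  setOf_crossing_eq_zerosIn D.x_strictMono _ _ i j k l

theorem properZeros_sub (hij : i < j) (hkl : k < l) (hne : (i, j) ≠ (k, l)) :
    ProperZeros (D.e i j - D.e k l) (D.x (max i k)) (D.x (min j l)) where
  continuousOn := by
    rw [D.x_strictMono.monotone.map_max, D.x_strictMono.monotone.map_min, ← Set.Icc_inter_Icc]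
    exact ((D.cont i j hij).mono Set.inter_subset_left).sub
      ((D.cont k l hkl).mono Set.inter_subset_right)
  finite := by
    rw [← D.crossSet_eq_zerosIn]
    exact D.cross_finite i j k l hij hkl hne
  sign_change t ht := by
    rw [← D.crossSet_eq_zerosIn] at ht
    obtain ⟨ε, hε, hsign⟩ := D.sign_change i j k l hij hkl hne t ht.1 ht.2.1 ht.2.2
    rw [D.x_strictMono.monotone.map_max, D.x_strictMono.monotone.map_min]
    exact ⟨ε, hε, fun s hs hsε u hu huε => hsign s hs.1 hsε hs.2 u hu.2 hu.1 huε⟩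

theorem crossCount_eq_zero_of_forall_ne
    (h : ∀ t ∈ Set.Ioo (D.x (max i k)) (D.x (min j l)), D.e i j t ≠ D.e k l t) :
    D.crossCount i j k l = 0 := by
  have hempty : zerosIn (D.e i j - D.e k l) (D.x (max i k)) (D.x (min j l)) = ∅ :=
    Set.eq_empty_of_forall_notMem fun t ht => h t ht.1 (sub_eq_zero.1 ht.2)
  rw [crossCount, crossSet_eq_zerosIn, hempty, Set.ncard_empty]

theorem crossCount_eq_zero_of_le (h : min j l ≤ max i k) : D.crossCount i j k l = 0 :=
  D.crossCount_eq_zero_of_forall_ne fun _ ht =>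
    absurd (ht.1.trans ht.2) (D.x_strictMono.monotone h).not_gt

end Crossings

namespace Realizes

variable {D : XMonotoneDrawing n} {i j k l : Fin n}

theorem eq_true_iff (hσ : D.Realizes σ) (hij : i < j) (hjk : j < k) :
    σ i j k = true ↔ 0 < D.e i k (D.x j) := by
  simp [← hσ i j k hij hjk, sig]

theorem eq_false_iff (hσ : D.Realizes σ) (hij : i < j) (hjk : j < k) :
    σ i j k = false ↔ D.e i k (D.x j) < 0 := by
  rw [← Bool.not_eq_true, hσ.eq_true_iff hij hjk, not_lt,
    (D.avoid_vertex i j k hij hjk).le_iff_lt]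

theorem lt_at_max_iff (hσ : D.Realizes σ) (h : max i k < min j l) (hik : i ≠ k) :
    D.e i j (D.x (max i k)) < D.e k l (D.x (max i k)) ↔ Sig.LeftBelow σ i j k l := by
  rw [max_lt_iff, lt_min_iff, lt_min_iff] at h
  rcases hik.lt_or_gt with hlt | hlt
  · rw [max_eq_right hlt.le, D.end_left k l h.2.2, ← hσ.eq_false_iff hlt h.2.1]
    simp [Sig.LeftBelow, hlt, hlt.not_gt]
  · rw [max_eq_left hlt.le, D.end_left i j h.1.1, ← hσ.eq_true_iff hlt h.1.2]
    simp [Sig.LeftBelow, hlt, hlt.not_gt]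

theorem lt_at_min_iff (hσ : D.Realizes σ) (h : max i k < min j l) (hjl : j ≠ l) :
    D.e i j (D.x (min j l)) < D.e k l (D.x (min j l)) ↔ Sig.RightBelow σ i j k l := by
  rw [max_lt_iff, lt_min_iff, lt_min_iff] at h
  rcases hjl.lt_or_gt with hlt | hlt
  · rw [min_eq_left hlt.le, D.end_right i j h.1.1, ← hσ.eq_true_iff h.2.1 hlt]
    simp [Sig.RightBelow, hlt, hlt.not_gt]
  · rw [min_eq_right hlt.le, D.end_right k l h.2.2, ← hσ.eq_false_iff h.1.2 hlt]
    simp [Sig.RightBelow, hlt, hlt.not_gt]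

end Realizes

section Ends

variable (D : XMonotoneDrawing n) {i j k l : Fin n}

theorem ne_at_max (h : max i k < min j l) (hik : i ≠ k) :
    D.e i j (D.x (max i k)) ≠ D.e k l (D.x (max i k)) := by
  rw [max_lt_iff, lt_min_iff, lt_min_iff] at h
  rcases hik.lt_or_gt with hlt | hlt
  · rw [max_eq_right hlt.le, D.end_left k l h.2.2]
    exact D.avoid_vertex i k j hlt h.2.1
  · rw [max_eq_left hlt.le, D.end_left i j h.1.1]
    exact (D.avoid_vertex k i l hlt h.1.2).symm

theorem ne_at_min (h : max i k < min j l) (hjl : j ≠ l) :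
    D.e i j (D.x (min j l)) ≠ D.e k l (D.x (min j l)) := by
  rw [max_lt_iff, lt_min_iff, lt_min_iff] at h
  rcases hjl.lt_or_gt with hlt | hlt
  · rw [min_eq_left hlt.le, D.end_right i j h.1.1]
    exact (D.avoid_vertex k j l h.2.1 hlt).symm
  · rw [min_eq_right hlt.le, D.end_right k l h.2.2]
    exact D.avoid_vertex i l j h.1.2 hlt

end Ends

theorem Realizes.even_crossCount_iff {D : XMonotoneDrawing n} {i j k l : Fin n}
    (hσ : D.Realizes σ) (h : max i k < min j l) (hik : i ≠ k) (hjl : j ≠ l) :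
    Even (D.crossCount i j k l) ↔ (Sig.LeftBelow σ i j k l ↔ Sig.RightBelow σ i j k l) := by
  have ⟨hi, hk⟩ := max_lt_iff.1 h
  rw [crossCount, crossSet_eq_zerosIn, (D.properZeros_sub (hi.trans_le (min_le_left j l))
      (hk.trans_le (min_le_right j l)) (by simp [hik])).even_ncard_zerosIn_iff
      (D.x_strictMono h).le (sub_ne_zero.2 (D.ne_at_max h hik)) (sub_ne_zero.2 (D.ne_at_min h hjl)),
    Pi.sub_apply, sub_neg, Pi.sub_apply, sub_neg, hσ.lt_at_max_iff h hik, hσ.lt_at_min_iff h hjl]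

theorem Realizes.even_crossCount_congr {D D' : XMonotoneDrawing n} {i j k l : Fin n}
    (hσ : D.Realizes σ) (hσ' : D'.Realizes σ) (hik : i ≠ k) (hjl : j ≠ l) :
    Even (D.crossCount i j k l) ↔ Even (D'.crossCount i j k l) := by
  rcases lt_or_ge (max i k) (min j l) with h | h
  · rw [hσ.even_crossCount_iff h hik hjl, hσ'.even_crossCount_iff h hik hjl]
  · rw [D.crossCount_eq_zero_of_le h, D'.crossCount_eq_zero_of_le h]

theorem Semisimple.weaklySemisimple {D : XMonotoneDrawing n} (hD : D.Semisimple) :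
    D.WeaklySemisimple := fun i j k l hij hkl hne hadj => by
  rw [hD i j k l hij hkl hne hadj]
  exact Even.zero

namespace WeaklySemisimple

variable {D : XMonotoneDrawing n} {i j k l : Fin n}

theorem eventually_lt_iff_below (hD : D.WeaklySemisimple) (hσ : D.Realizes σ) (hij : i < j)
    (hil : i < l) (hjl : j ≠ l) :
    ∀ᶠ t in 𝓝[>] D.x i, D.e i j t < D.e i l t ↔ Sig.Below σ i j l := by
  have hne : (i, j) ≠ (i, l) := by simp [hjl]
  have h : max i i < min j l := by simp [hij, hil]
  have heven := hD i j i l hij hil hne (.inl rfl)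
  rw [crossCount, crossSet_eq_zerosIn] at heven
  have := (D.properZeros_sub hij hil hne).eventually_nhdsGT_neg_iff (D.x_strictMono h)
    (sub_ne_zero.2 (D.ne_at_min h hjl)) heven
  rw [max_self] at this
  filter_upwards [this] with t ht
  rwa [Pi.sub_apply, sub_neg, Pi.sub_apply, sub_neg, hσ.lt_at_min_iff h hjl] at ht

theorem eventually_lt_iff_arrivesBelow (hD : D.WeaklySemisimple) (hσ : D.Realizes σ)
    (hik : i < k) (hlk : l < k) (hil : i ≠ l) :
    ∀ᶠ t in 𝓝[<] D.x k, D.e i k t < D.e l k t ↔ Sig.ArrivesBelow σ k i l := by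
  have hne : (i, k) ≠ (l, k) := by simp [hil]
  have h : max i l < min k k := by simp [hik, hlk]
  have heven := hD i k l k hik hlk hne (.inr <| .inr <| .inr rfl)
  rw [crossCount, crossSet_eq_zerosIn] at heven
  have := (D.properZeros_sub hik hlk hne).eventually_nhdsLT_neg_iff (D.x_strictMono h)
    (sub_ne_zero.2 (D.ne_at_max h hil)) heven
  rw [min_self] at this
  filter_upwards [this] with t ht
  rwa [Pi.sub_apply, sub_neg, Pi.sub_apply, sub_neg, hσ.lt_at_max_iff h hil] at ht

theorem locallyTransitive (hD : D.WeaklySemisimple) (hσ : D.Realizes σ) :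
    Sig.LocallyTransitive σ where
  below_trans {i j k l} hij hik hil hjk hkl := by
    have hjl : j ≠ l := fun h => Sig.Below.asymm hjk (h ▸ hkl)
    obtain ⟨t, h₁, h₂, h₃⟩ := ((hD.eventually_lt_iff_below hσ hij hik (Sig.Below.ne hjk)).and <|
      (hD.eventually_lt_iff_below hσ hik hil (Sig.Below.ne hkl)).and <|
        hD.eventually_lt_iff_below hσ hij hil hjl).exists
    exact h₃.1 ((h₁.2 hjk).trans (h₂.2 hkl))
  arrivesBelow_trans {k a b c} hak hbk hck hab hbc := by
    have hac : a ≠ c := fun h => Sig.ArrivesBelow.asymm hab (h ▸ hbc)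
    obtain ⟨t, h₁, h₂, h₃⟩ := ((hD.eventually_lt_iff_arrivesBelow hσ hak hbk
        (Sig.ArrivesBelow.ne hab)).and <|
      (hD.eventually_lt_iff_arrivesBelow hσ hbk hck (Sig.ArrivesBelow.ne hbc)).and <|
        hD.eventually_lt_iff_arrivesBelow hσ hak hck hac).exists
    exact h₃.1 ((h₁.2 hab).trans (h₂.2 hbc))

theorem exists_Ioo_lt_iff_lt_right {D' : XMonotoneDrawing n} (hD : D.WeaklySemisimple)
    (hD' : D'.WeaklySemisimple) (hσ : D.Realizes σ) (hσ' : D'.Realizes σ) (hx : D'.x = D.x)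
    (hij : i < j) (hil : i < l) (hjl : j ≠ l) :
    ∃ ε > 0, ∀ t ∈ Set.Ioo (D.x i) (D.x i + ε),
      D.e i j t < D.e i l t ↔ D'.e i j t < D'.e i l t := by
  have h' := hD'.eventually_lt_iff_below hσ' hij hil hjl
  rw [hx] at h'
  obtain ⟨q, hq, hsub⟩ := mem_nhdsGT_iff_exists_Ioo_subset.1
    ((hD.eventually_lt_iff_below hσ hij hil hjl).and h')
  refine ⟨q - D.x i, sub_pos.2 hq, fun t ht => ?_⟩
  rw [add_sub_cancel] at ht
  exact (hsub ht).1.trans (hsub ht).2.symm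

theorem exists_Ioo_lt_iff_lt_left {D' : XMonotoneDrawing n} (hD : D.WeaklySemisimple)
    (hD' : D'.WeaklySemisimple) (hσ : D.Realizes σ) (hσ' : D'.Realizes σ) (hx : D'.x = D.x)
    (hik : i < k) (hlk : l < k) (hil : i ≠ l) :
    ∃ ε > 0, ∀ t ∈ Set.Ioo (D.x k - ε) (D.x k),
      D.e i k t < D.e l k t ↔ D'.e i k t < D'.e l k t := by
  have h' := hD'.eventually_lt_iff_arrivesBelow hσ' hik hlk hil
  rw [hx] at h'
  obtain ⟨p, hp, hsub⟩ := mem_nhdsLT_iff_exists_Ioo_subset.1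
    ((hD.eventually_lt_iff_arrivesBelow hσ hik hlk hil).and h')
  refine ⟨D.x k - p, sub_pos.2 hp, fun t ht => ?_⟩
  rw [sub_sub_cancel] at ht
  exact (hsub ht).1.trans (hsub ht).2.symm

end WeaklySemisimple

section OfPolylines

variable {V : Fin n → Fin n → Fin n → ℝ} {x : Fin n → ℝ} {e : Fin n → Fin n → ℝ → ℝ}

theorem realizes_ofPolylines (hV : Sig.IsHeight σ V) (hx : StrictMono x)
    (he : ∀ i j, IsPolyline x (V · i j) (e i j)) : (ofPolylines hV hx he).Realizes σ := by
  intro i j k hij hjk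
  have hnode : e i k (x j) = V j i k := (he i k).apply_node j
  cases hs : σ i j k
  · simpa [sig, ofPolylines, hnode] using (hV.neg hij hjk hs).le
  · simpa [sig, ofPolylines, hnode] using hV.pos hij hjk hs

theorem semisimple_ofPolylines (hV : Sig.IsHeight σ V) (hx : StrictMono x)
    (he : ∀ i j, IsPolyline x (V · i j) (e i j)) : (ofPolylines hV hx he).Semisimple := by
  intro i j k l _ _ hne hadj
  rcases hadj with rfl | rfl | rfl | rfl
  · have hjl : j ≠ l := fun h => hne (by rw [h])
    refine crossCount_eq_zero_of_forall_ne _ fun t ht => ?_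
    rw [max_self] at ht
    rcases Sig.below_or_below i hjl with h | h
    · exact (hV.apply_lt_of_below hx he h ht).ne
    · exact (hV.apply_lt_of_below hx he h (min_comm j l ▸ ht)).ne'
  · exact crossCount_eq_zero_of_le _ ((min_le_right _ _).trans (le_max_left _ _))
  · exact crossCount_eq_zero_of_le _ ((min_le_left _ _).trans (le_max_right _ _))
  · have hik : i ≠ k := fun h => hne (by rw [h])
    refine crossCount_eq_zero_of_forall_ne _ fun t ht => ?_
    rw [min_self] at ht
    rcases Sig.arrivesBelow_or_arrivesBelow j hik with h | h
    · exact (hV.apply_lt_of_arrivesBelow hx he h ht).ne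
    · exact (hV.apply_lt_of_arrivesBelow hx he h (max_comm i k ▸ ht)).ne'

end OfPolylines

end XMonotoneDrawing

open XMonotoneDrawing in
theorem Sig.LocallyTransitive.exists_semisimple {n : ℕ}
    {σ : Fin n → Fin n → Fin n → Bool} (hσ : Sig.LocallyTransitive σ)
    {x : Fin n → ℝ} (hx : StrictMono x) :
    ∃ D : XMonotoneDrawing n, D.Semisimple ∧ D.x = x ∧ D.Realizes σ := by
  obtain ⟨V, hV⟩ := hσ.exists_isHeight
  choose e he using fun i j => exists_isPolyline hx (V · i j)
  exact ⟨ofPolylines hV hx he, semisimple_ofPolylines hV hx he, rfl, realizes_ofPolylines hV hx he⟩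

/-- Every weakly semisimple x-monotone drawing `D` of `K n` can be
replaced by a semisimple x-monotone drawing `D'` with the same vertex coordinates, the
same signature function (above/below relations of vertices and edges), the same parity
of the number of crossings for every pair of edges, and the same rotation system (the
vertical orders of edges in small punctured neighborhoods to the right and to the left
of each vertex agree). -/
theorem weakly_semisimple_to_semisimple_monotone (n : ℕ) (D : XMonotoneDrawing n)
    (hD : D.WeaklySemisimple) :
    ∃ D' : XMonotoneDrawing n, D'.Semisimple ∧ D'.x = D.x ∧
      (∀ i j k : Fin n, i < j → j < k → D'.sig i j k = D.sig i j k) ∧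
      (∀ i j k l : Fin n, i < j → k < l → (i, j) ≠ (k, l) →
        (Odd (D'.crossCount i j k l) ↔ Odd (D.crossCount i j k l))) ∧
      (∀ i j j' : Fin n, i < j → i < j' → j ≠ j' →
        ∃ ε > (0 : ℝ), ∀ t ∈ Set.Ioo (D.x i) (D.x i + ε),
          (D.e i j t < D.e i j' t ↔ D'.e i j t < D'.e i j' t)) ∧
      (∀ a a' i : Fin n, a < i → a' < i → a ≠ a' →
        ∃ ε > (0 : ℝ), ∀ t ∈ Set.Ioo (D.x i - ε) (D.x i),
          (D.e a i t < D.e a' i t ↔ D'.e a i t < D'.e a' i t)) := by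
  have hσ : D.Realizes D.sig := fun _ _ _ _ _ => rfl
  obtain ⟨D', hD', hx, hσ'⟩ := (hD.locallyTransitive hσ).exists_semisimple D.x_strictMono
  have hparity (i j k l : Fin n) (hij : i < j) (hkl : k < l) (hne : (i, j) ≠ (k, l)) :
      Even (D'.crossCount i j k l) ↔ Even (D.crossCount i j k l) := by
    by_cases hadj : XMonotoneDrawing.Adj i j k l
    · exact iff_of_true (hD'.weaklySemisimple i j k l hij hkl hne hadj)
        (hD i j k l hij hkl hne hadj)
    · exact hσ'.even_crossCount_congr hσ (fun h => hadj (.inl h))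
        fun h => hadj (.inr (.inr (.inr h)))
  refine ⟨D', hD', hx, hσ', fun i j k l hij hkl hne => ?_, fun i j l hij hil hjl => ?_,
    fun i l k hik hlk hil => ?_⟩
  · rw [← Nat.not_even_iff_odd, ← Nat.not_even_iff_odd, hparity i j k l hij hkl hne]
  · exact hD.exists_Ioo_lt_iff_lt_right hD'.weaklySemisimple hσ hσ' hx hij hil hjl
  · exact hD.exists_Ioo_lt_iff_lt_left hD'.weaklySemisimple hσ hσ' hx hik hlk hil
end
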